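/- arXiv:0710.2454 — 7 statements merged into one kernel-verified Lean document; each statement's English description precedes it below -/
import Mathlib

section
/- For every integer n ≥ 1 and every finite number of variables, the following identity of symmetric polynomials over ℚ holds: Σ_{(i,j,k)∈ℕ³, i+j+k=n} i²·e_i·e_j·e_k = Σ_{μ ⊢ n} (−1)^{n−ℓ(μ)} · 3^{ℓ(μ)−2} · (n² + 2·p_2(μ)) · z_μ^{−1} · p_μ, where the right-hand sum is over all partitions μ of n. -/
open MvPolynomial Finset

/-!
Let `E = ∑ e_k t^k` and `θ = t d/dt`. Newton's identities say that `θE = L E` for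
`L = ∑_{k ≥ 1} (-1)^{k+1} p_k t^k`. The sum with `r + 1` factors `e_i`, the first index squared, is
the coefficient of `t^n` in `(θ²E) E^r`. The logarithmic derivative of `F = E^{r+1}` is
`M = (r + 1) L`, and since `θ` is a derivation, `(r + 1)² (θ²E) E^r = θ²F + r (θM) F`; the theorem
is the case `r = 2`.

Whenever `θF = M F` with `F(0) = 1`, the coefficient of `t^n` in `F` is the cycle index
`∑_{μ ⊢ n} z_μ⁻¹ ∏_j M_{μ_j}`: removing a part `k` from `μ` divides `z_μ` by `k m_k(μ)`, so marking
one part of each partition gives for the cycle index the recursion that `θF = M F` imposes on `F`.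
Marking each part `k` with an extra weight `k` shows in the same way that `(θM) F` is obtained by
inserting `p_2(μ)` in that sum.
-/

section Partitions

lemma partition_card_parts_le {n : ℕ} (μ : n.Partition) : μ.parts.card ≤ n := by
  simpa [μ.parts_sum] using
    Multiset.card_nsmul_le_sum (s := μ.parts) (a := 1) fun _ hk => μ.parts_pos hk

lemma prod_map_pow_succ {M : Type*} [CommMonoid M] (a : M) (s : Multiset ℕ) :
    (s.map fun k => a ^ (k + 1)).prod = a ^ (s.sum + s.card) := by
  induction s using Multiset.induction_on with
  | empty => simp
  | cons k s ih =>
    rw [Multiset.map_cons, Multiset.prod_cons, ih, ← pow_add, Multiset.sum_cons,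
      Multiset.card_cons, add_add_add_comm, add_comm 1]

lemma sum_partition_sum_parts {M : Type*} [AddCommMonoid M] (n : ℕ) (f : ℕ → Multiset ℕ → M) :
    ∑ μ : n.Partition, ∑ k ∈ μ.parts.toFinset, f k μ.parts =
      ∑ k ∈ Icc 1 n, ∑ ν : (n - k).Partition, f k (k ::ₘ ν.parts) := by
  have swap : ∑ μ : n.Partition, ∑ k ∈ μ.parts.toFinset, f k μ.parts =
      ∑ k ∈ Icc 1 n, ∑ μ : n.Partition with k ∈ μ.parts, f k μ.parts := by
    refine sum_comm' fun μ k => ?_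
    simp only [mem_univ, Multiset.mem_toFinset, true_and, mem_filter, mem_Icc]
    exact ⟨fun hk => ⟨hk, μ.parts_pos hk, μ.le_of_mem_parts hk⟩, fun h => h.1⟩
  rw [swap]
  refine sum_congr rfl fun k hk => ?_
  obtain ⟨hk1, hkn⟩ := mem_Icc.1 hk
  rw [sum_subtype (p := fun μ : n.Partition => k ∈ μ.parts) _ (by simp),
    ← Equiv.sum_comp (Nat.Partition.partitionWithPartEquiv hk1 hkn).symm]
  simp only [Nat.Partition.partitionWithPartEquiv_symm_apply_parts]

end Partitions

section CycleIndex

/-- The integer `z_μ = ∏_i i^{m_i} m_i!` of a partition `μ` given as the multiset of its parts; it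
is the order of the centralizer of a permutation of cycle type `μ`. -/
def centralizerOrder (s : Multiset ℕ) : ℕ := s.prod * ∏ i ∈ s.toFinset, (s.count i).factorial

lemma centralizerOrder_cons (k : ℕ) (s : Multiset ℕ) :
    centralizerOrder (k ::ₘ s) = k * (k ::ₘ s).count k * centralizerOrder s := by
  have extend : ∏ i ∈ s.toFinset, (s.count i).factorial =
      ∏ i ∈ insert k s.toFinset, (s.count i).factorial :=
    prod_subset (subset_insert _ _) fun i _ hi => by
      rw [Multiset.count_eq_zero_of_notMem (mt Multiset.mem_toFinset.2 hi), Nat.factorial_zero]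
  have others : ∏ i ∈ (insert k s.toFinset).erase k, ((k ::ₘ s).count i).factorial =
      ∏ i ∈ (insert k s.toFinset).erase k, (s.count i).factorial :=
    prod_congr rfl fun i hi => by rw [Multiset.count_cons_of_ne (ne_of_mem_erase hi)]
  have hk : k ∈ insert k s.toFinset := mem_insert_self _ _
  rw [centralizerOrder, centralizerOrder, extend, Multiset.toFinset_cons, Multiset.prod_cons,
    ← mul_prod_erase _ _ hk, ← mul_prod_erase _ _ hk, others, Multiset.count_cons_self,
    Nat.factorial_succ]
  ring

variable {A : Type*} [CommRing A] [Algebra ℚ A]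

/-- The term `z_μ⁻¹ ∏_j b_{μ_j}` of the cycle index, for a partition `μ` given as the multiset of
its parts. -/
noncomputable def cycleIndexTerm (b : ℕ → A) (s : Multiset ℕ) : A :=
  (centralizerOrder s : ℚ)⁻¹ • (s.map b).prod

/-- The cycle index of the symmetric group on `n` letters, evaluated at `b_1, b_2, …`. -/
noncomputable def cycleIndex (b : ℕ → A) (n : ℕ) : A := ∑ μ : n.Partition, cycleIndexTerm b μ.parts

lemma cycleIndex_zero (b : ℕ → A) : cycleIndex b 0 = 1 := by
  simp [cycleIndex, cycleIndexTerm, centralizerOrder]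

lemma cycleIndexTerm_smul (c : ℕ → ℚ) (b : ℕ → A) (s : Multiset ℕ) :
    cycleIndexTerm (fun k => c k • b k) s = (s.map c).prod • cycleIndexTerm b s := by
  have prod_smul : (s.map fun k => c k • b k).prod = (s.map c).prod • (s.map b).prod := by
    simp only [Algebra.smul_def, Multiset.prod_map_mul, map_multiset_prod, Multiset.map_map,
      Function.comp_def]
  rw [cycleIndexTerm, prod_smul, smul_comm, cycleIndexTerm]

lemma mul_count_smul_cycleIndexTerm_cons (b : ℕ → A) {k : ℕ} (hk : k ≠ 0) (s : Multiset ℕ) :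
    (k * (k ::ₘ s).count k) • cycleIndexTerm b (k ::ₘ s) = b k * cycleIndexTerm b s := by
  have h : ((k * (k ::ₘ s).count k : ℕ) : ℚ) ≠ 0 := by
    rw [Multiset.count_cons_self]
    positivity
  rw [cycleIndexTerm, cycleIndexTerm, centralizerOrder_cons, Nat.cast_mul, mul_inv,
    ← Nat.cast_smul_eq_nsmul ℚ, smul_smul, mul_inv_cancel_left₀ h, Multiset.map_cons,
    Multiset.prod_cons, mul_smul_comm]

lemma sum_partition_sum_smul_cycleIndexTerm (b : ℕ → A) (g : ℕ → ℕ) (n : ℕ) :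
    ∑ μ : n.Partition, (μ.parts.map fun k => g k * k).sum • cycleIndexTerm b μ.parts =
      ∑ k ∈ Icc 1 n, g k • (b k * cycleIndex b (n - k)) := by
  calc
    _ = ∑ μ : n.Partition, ∑ k ∈ μ.parts.toFinset,
          (g k * (k * μ.parts.count k)) • cycleIndexTerm b μ.parts := by
      refine sum_congr rfl fun μ _ => ?_
      rw [sum_multiset_map_count, sum_smul]
      exact sum_congr rfl fun k _ => by rw [smul_eq_mul, mul_comm, mul_assoc]
    _ = ∑ k ∈ Icc 1 n, ∑ ν : (n - k).Partition,
          (g k * (k * (k ::ₘ ν.parts).count k)) • cycleIndexTerm b (k ::ₘ ν.parts) :=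
      sum_partition_sum_parts n fun k s => (g k * (k * s.count k)) • cycleIndexTerm b s
    _ = _ := by
      refine sum_congr rfl fun k hk => ?_
      have hk0 : k ≠ 0 := Nat.one_le_iff_ne_zero.1 (mem_Icc.1 hk).1
      simp only [mul_smul (g k), mul_count_smul_cycleIndexTerm_cons b hk0, cycleIndex, mul_sum,
        smul_sum]

lemma nsmul_cycleIndex (b : ℕ → A) (n : ℕ) :
    n • cycleIndex b n = ∑ k ∈ Icc 1 n, b k * cycleIndex b (n - k) := by
  simpa [cycleIndex, smul_sum, Nat.Partition.parts_sum] using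
    sum_partition_sum_smul_cycleIndexTerm b 1 n

end CycleIndex

section EulerOperator

open PowerSeries

/-- The Euler operator `θ = t d/dt` on power series in `t`. -/
noncomputable def eulerOp (R : Type*) [CommRing R] : Derivation R R⟦X⟧ R⟦X⟧ :=
  (PowerSeries.X : R⟦X⟧) • derivative R

variable {R : Type*} [CommRing R]

lemma coeff_eulerOp (f : R⟦X⟧) (n : ℕ) :
    coeff n (eulerOp R f) = n • coeff n f := by
  rw [eulerOp, Derivation.smul_apply, smul_eq_mul]
  cases n with
  | zero => simp
  | succ m => rw [coeff_succ_X_mul, coeff_derivative, nsmul_eq_mul, Nat.cast_succ, mul_comm]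

lemma eulerOp_pow_of_eulerOp_eq_mul {E L : R⟦X⟧} (h : eulerOp R E = L * E) (r : ℕ) :
    eulerOp R (E ^ r) = (r • L) * E ^ r := by
  cases r with
  | zero => simp
  | succ r =>
    rw [Derivation.leibniz_pow, h, Nat.add_sub_cancel, smul_eq_mul, pow_succ, smul_mul_assoc]
    ring

lemma sq_smul_eulerOp_eulerOp_mul_pow {E L : R⟦X⟧} (h : eulerOp R E = L * E) (r : ℕ) :
    (r + 1) ^ 2 • (eulerOp R (eulerOp R E) * E ^ r) =
      eulerOp R (eulerOp R (E ^ (r + 1))) +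
        r • (eulerOp R ((r + 1) • L) * E ^ (r + 1)) := by
  have map_smul : eulerOp R ((r + 1) • L) = (r + 1) • eulerOp R L := map_nsmul _ _ _
  rw [eulerOp_pow_of_eulerOp_eq_mul h, h, Derivation.leibniz, Derivation.leibniz, map_smul,
    eulerOp_pow_of_eulerOp_eq_mul h, h]
  simp only [smul_eq_mul, nsmul_eq_mul]
  push_cast
  ring

lemma coeff_mul_eq_sum_Icc {f : R⟦X⟧} (hf : constantCoeff f = 0) (g : R⟦X⟧) (n : ℕ) :
    coeff n (f * g) = ∑ k ∈ Icc 1 n, coeff k f * coeff (n - k) g := by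
  rw [PowerSeries.coeff_mul,
    Nat.sum_antidiagonal_eq_sum_range_succ (fun i j => coeff i f * coeff j g),
    range_eq_Ico, sum_eq_sum_Ico_succ_bot n.succ_pos, coeff_zero_eq_constantCoeff_apply, hf,
    zero_mul, zero_add]
  rfl

lemma constantCoeff_eulerOp (f : R⟦X⟧) : constantCoeff (eulerOp R f) = 0 := by
  rw [← coeff_zero_eq_constantCoeff_apply, coeff_eulerOp, zero_smul]

lemma constantCoeff_eq_zero_of_eulerOp_eq_mul {E L : R⟦X⟧} (hE : constantCoeff E = 1)
    (h : eulerOp R E = L * E) : constantCoeff L = 0 := by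
  simpa [constantCoeff_eulerOp, hE] using (congrArg PowerSeries.constantCoeff h).symm

lemma coeff_mul_pow_eq_sum_antidiagonalTuple (f g : R⟦X⟧) (r n : ℕ) :
    coeff n (f * g ^ r) =
      ∑ v ∈ Nat.antidiagonalTuple (r + 1) n, coeff (v 0) f * ∏ i : Fin r, coeff (v i.succ) g := by
  have as_prod : f * g ^ r = ∏ i : Fin (r + 1), (Fin.cons f fun _ => g : Fin (r + 1) → R⟦X⟧) i := by
    simp [Fin.prod_univ_succ]
  rw [as_prod, PowerSeries.coeff_prod]
  refine sum_equiv Finsupp.equivFunOnFinite (fun v => ?_) fun v _ => ?_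
  · simp [Nat.mem_antidiagonalTuple]
  · simp [Fin.prod_univ_succ]

end EulerOperator

section LogarithmicDerivative

open PowerSeries

variable {A : Type*} [CommRing A] [Algebra ℚ A] {E L : A⟦X⟧}

lemma cycleIndexTerm_coeff_nsmul (c : ℕ) (f : A⟦X⟧) (s : Multiset ℕ) :
    cycleIndexTerm (fun k => coeff k (c • f)) s =
      (c : ℚ) ^ s.card • cycleIndexTerm (fun k => coeff k f) s := by
  have hcoeff (k : ℕ) : coeff k (c • f) = (c : ℚ) • coeff k f := by
    rw [map_nsmul, Nat.cast_smul_eq_nsmul]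
  simp only [hcoeff, cycleIndexTerm_smul, Multiset.map_const', Multiset.prod_replicate]

lemma coeff_eq_cycleIndex (hE : constantCoeff E = 1) (h : eulerOp A E = L * E) (n : ℕ) :
    coeff n E = cycleIndex (fun k => coeff k L) n := by
  induction n using Nat.strong_induction_on with
  | _ n ih =>
    rcases eq_or_ne n 0 with rfl | hn
    · rw [coeff_zero_eq_constantCoeff_apply, hE, cycleIndex_zero]
    · have : IsAddTorsionFree A := .of_module_rat A
      refine nsmul_right_injective hn ?_
      dsimp only
      rw [← coeff_eulerOp, h, nsmul_cycleIndex,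
        coeff_mul_eq_sum_Icc (constantCoeff_eq_zero_of_eulerOp_eq_mul hE h)]
      refine sum_congr rfl fun k hk => ?_
      rw [ih (n - k) (Nat.sub_lt (Nat.pos_of_ne_zero hn) (mem_Icc.1 hk).1)]

lemma coeff_eulerOp_mul_eq_sum_partition (hE : constantCoeff E = 1) (h : eulerOp A E = L * E)
    (n : ℕ) :
    coeff n (eulerOp A L * E) = ∑ μ : n.Partition,
      (μ.parts.map (· ^ 2)).sum • cycleIndexTerm (fun k => coeff k L) μ.parts := by
  simp only [pow_two, sum_partition_sum_smul_cycleIndexTerm _ fun k => k,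
    coeff_mul_eq_sum_Icc (constantCoeff_eulerOp L), coeff_eulerOp, coeff_eq_cycleIndex hE h,
    smul_mul_assoc]

theorem coeff_eulerOp_eulerOp_mul_pow (hE : constantCoeff E = 1) (h : eulerOp A E = L * E)
    (r n : ℕ) :
    coeff n (eulerOp A (eulerOp A E) * E ^ r) = ∑ μ : n.Partition,
      ((r + 1 : ℚ) ^ ((μ.parts.card : ℤ) - 2) *
        ((n : ℚ) ^ 2 + r * ((μ.parts.map (· ^ 2)).sum : ℕ))) •
        cycleIndexTerm (fun k => coeff k L) μ.parts := by
  have hr : (r + 1 : ℚ) ≠ 0 := by positivity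
  have hF : constantCoeff (E ^ (r + 1)) = 1 := by rw [map_pow, hE, one_pow]
  have hlog := eulerOp_pow_of_eulerOp_eq_mul h (r + 1)
  have key := congrArg (coeff n) (sq_smul_eulerOp_eulerOp_mul_pow h r)
  rw [map_nsmul, map_add, coeff_eulerOp, coeff_eulerOp, map_nsmul, coeff_eq_cycleIndex hF hlog,
    coeff_eulerOp_mul_eq_sum_partition hF hlog, cycleIndex, smul_sum, smul_sum, smul_sum,
    ← sum_add_distrib] at key
  refine smul_right_injective A (pow_ne_zero 2 hr) ?_
  dsimp only
  rw [← Nat.cast_succ, ← Nat.cast_pow, Nat.cast_smul_eq_nsmul, key, smul_sum]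
  refine sum_congr rfl fun μ _ => ?_
  rw [cycleIndexTerm_coeff_nsmul]
  simp only [← Nat.cast_smul_eq_nsmul ℚ, smul_smul, ← add_smul]
  congr 1
  rw [Nat.cast_succ, zpow_sub₀ hr, zpow_natCast, zpow_ofNat, Nat.cast_pow, Nat.cast_succ]
  field_simp

end LogarithmicDerivative

section SymmetricPolynomials

open PowerSeries (coeff constantCoeff)

variable (σ R : Type*) [Fintype σ] [CommRing R]

/-- The generating series `E = ∑ e_k t^k` of the elementary symmetric polynomials. -/
noncomputable def esymmSeries : PowerSeries (MvPolynomial σ R) :=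
  PowerSeries.mk fun k => esymm σ R k

/-- The series `L = ∑_{k ≥ 1} (-1)^{k+1} p_k t^k`, the logarithmic derivative of `esymmSeries` with
respect to `eulerOp`. -/
noncomputable def signedPsumSeries : PowerSeries (MvPolynomial σ R) :=
  PowerSeries.mk fun k => if k = 0 then 0 else (-1) ^ (k + 1) * psum σ R k

lemma constantCoeff_esymmSeries : constantCoeff (esymmSeries σ R) = 1 := by
  simp [esymmSeries]

lemma eulerOp_esymmSeries :
    eulerOp _ (esymmSeries σ R) = signedPsumSeries σ R * esymmSeries σ R := by
  ext1 n
  rw [coeff_eulerOp, mul_comm (signedPsumSeries σ R), PowerSeries.coeff_mul, nsmul_eq_mul]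
  simp only [esymmSeries, signedPsumSeries, PowerSeries.coeff_mk]
  rw [mul_esymm_eq_sum, mul_sum, sum_filter]
  refine sum_congr rfl fun x hx => ?_
  have hx' := mem_antidiagonal.1 hx
  by_cases h : x.2 = 0
  · rw [if_neg (by omega), if_pos h, mul_zero]
  · rw [if_pos (by omega), if_neg h, ← hx']
    have sign : ((-1 : MvPolynomial σ R) ^ x.1) * (-1) ^ x.1 = 1 := by
      rw [← mul_pow, neg_one_mul, neg_neg, one_pow]
    linear_combination ((-1) ^ (x.2 + 1) * esymm σ R x.1 * psum σ R x.2) * sign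

variable [Algebra ℚ R]

lemma cycleIndexTerm_signedPsumSeries {n : ℕ} (μ : n.Partition) :
    cycleIndexTerm (fun k => coeff k (signedPsumSeries σ R)) μ.parts =
      ((-1 : ℚ) ^ (n - μ.parts.card) * (centralizerOrder μ.parts : ℚ)⁻¹) • psumPart σ R μ := by
  have hcoeff : μ.parts.map (fun k => coeff k (signedPsumSeries σ R)) =
      μ.parts.map fun k => (-1 : ℚ) ^ (k + 1) • psum σ R k :=
    Multiset.map_congr rfl fun k hk => by
      simp [signedPsumSeries, (μ.parts_pos hk).ne', Algebra.smul_def]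
  have hsign : (-1 : ℚ) ^ (n + μ.parts.card) = (-1) ^ (n - μ.parts.card) :=
    neg_one_pow_congr (by grind [partition_card_parts_le μ])
  rw [cycleIndexTerm, hcoeff, ← cycleIndexTerm, cycleIndexTerm_smul, prod_map_pow_succ,
    μ.parts_sum, hsign, cycleIndexTerm, smul_smul, psumPart]

lemma sum_antidiagonalTuple_sq_smul_prod_esymm (r n : ℕ) :
    ∑ v ∈ Nat.antidiagonalTuple (r + 1) n, ((v 0 : ℚ) ^ 2) • ∏ i, esymm σ R (v i) =
      coeff n (eulerOp _ (eulerOp _ (esymmSeries σ R)) * esymmSeries σ R ^ r) := by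
  rw [coeff_mul_pow_eq_sum_antidiagonalTuple]
  refine sum_congr rfl fun v _ => ?_
  simp only [coeff_eulerOp, esymmSeries, PowerSeries.coeff_mk, Fin.prod_univ_succ, pow_two,
    mul_smul, Nat.cast_smul_eq_nsmul, smul_mul_assoc]

theorem sum_sq_esymm_triple_eq_sum_powersum_general (r n : ℕ) :
    ∑ v ∈ Nat.antidiagonalTuple (r + 1) n, ((v 0 : ℚ) ^ 2) • ∏ i, esymm σ R (v i) =
    ∑ μ : n.Partition,
      ((-1 : ℚ) ^ (n - μ.parts.card) * (r + 1 : ℚ) ^ ((μ.parts.card : ℤ) - 2) *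
        ((n : ℚ) ^ 2 + r * ((μ.parts.map (· ^ 2)).sum : ℕ)) *
        (centralizerOrder μ.parts : ℚ)⁻¹) • psumPart σ R μ := by
  rw [sum_antidiagonalTuple_sq_smul_prod_esymm,
    coeff_eulerOp_eulerOp_mul_pow (constantCoeff_esymmSeries σ R) (eulerOp_esymmSeries σ R)]
  refine sum_congr rfl fun μ _ => ?_
  rw [cycleIndexTerm_signedPsumSeries, smul_smul]
  congr 1
  ring

end SymmetricPolynomials

/-- **Lemma 1, second identity.** For `n ≥ 1`, in any finite number of variables,
`∑_{i+j+k=n} i² e_i e_j e_k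
  = ∑_{μ ⊢ n} (-1)^{n-ℓ(μ)} 3^{ℓ(μ)-2} (n² + 2 p_2(μ)) z_μ⁻¹ p_μ` over `ℚ`. -/
theorem sum_sq_esymm_triple_eq_sum_powersum (n : ℕ) (hn : 1 ≤ n)
    (σ : Type*) [Fintype σ] [DecidableEq σ] :
    ∑ v ∈ Finset.Nat.antidiagonalTuple 3 n,
        ((v 0 : ℚ) ^ 2) • (esymm σ ℚ (v 0) * esymm σ ℚ (v 1) * esymm σ ℚ (v 2)) =
    ∑ μ : n.Partition,
      ((-1 : ℚ) ^ (n - μ.parts.card) * (3 : ℚ) ^ ((μ.parts.card : ℤ) - 2) *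
        ((n : ℚ) ^ 2 + 2 * ((μ.parts.map (· ^ 2)).sum : ℕ)) *
        (((μ.parts.prod : ℕ) : ℚ) *
          ∏ i ∈ μ.parts.toFinset, ((μ.parts.count i).factorial : ℚ))⁻¹) •
        psumPart σ ℚ μ := by
  simpa [centralizerOrder, Fin.prod_univ_three, show (2 : ℚ) + 1 = 3 by norm_num] using
    sum_sq_esymm_triple_eq_sum_powersum_general σ ℚ 2 n
end

section
/- For every integer n ≥ 1 and every finite number of variables, the following identity of symmetric polynomials over ℚ holds: Σ_{(i,j,k)∈ℕ³, i+j+k=n} e_i·e_j·e_k = (1/2) · Σ_{μ ⊢ n} (−1)^{n−ℓ(μ)} · ((ℓ(μ)+2)! / Π_i m_i(μ)!) · h_μ, where the right-hand sum is over all partitions μ of n. -/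
open MvPolynomial Finset

/-!
Put `H(t) = ∑ hᵢ tⁱ` and `E(t) = ∑ eᵢ tⁱ`. Then `E(-t) = ∏ (1 - xᵢ t) = H(t)⁻¹`, so with
`F = 1 - H`, which has no constant term, `E(-t) ^ r = (1 - F) ^ (-r)` is the result of substituting
`F` in the binomial series `(1 - t) ^ (-r) = ∑ multichoose r m t ^ m`. By the multinomial theorem
the coefficient of `tⁿ` in `F ^ m` is a sum over the partitions `μ` of `n` with `m` parts, in which
`μ` occurs once for each way of ordering its parts and contributes `∏ (-h_{μⱼ}) = (-1) ^ m h_μ`.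
-/

open scoped PowerSeries

theorem coeff_pow_eq_sum_antidiagonalTuple {R : Type*} [CommSemiring R] (f : R⟦X⟧) (r n : ℕ) :
    PowerSeries.coeff n (f ^ r) =
      ∑ v ∈ Finset.Nat.antidiagonalTuple r n, ∏ i, PowerSeries.coeff (v i) f := by
  rw [← Fin.prod_const, PowerSeries.coeff_prod, ← piAntidiag_univ_fin_eq_antidiagonalTuple,
    finsuppAntidiag, sum_map]
  exact sum_attach (piAntidiag univ n) fun v => ∏ i, PowerSeries.coeff (v i) f

theorem coeff_mk_one_pow (R : Type*) [CommRing R] (r m : ℕ) :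
    PowerSeries.coeff m ((PowerSeries.mk 1 : R⟦X⟧) ^ r) = r.multichoose m := by
  cases r with
  | zero => cases m <;> simp [PowerSeries.coeff_one]
  | succ r =>
    rw [PowerSeries.mk_one_pow_eq_mk_choose_add, PowerSeries.coeff_mk, Nat.multichoose_eq,
      Nat.add_right_comm, Nat.add_sub_cancel, Nat.choose_symm_add]

theorem prod_map_monomial {R : Type*} [CommSemiring R] (a : ℕ → R) (s : Multiset ℕ) :
    (s.map fun i => PowerSeries.monomial i (a i)).prod =
      PowerSeries.monomial s.sum (s.map a).prod := by
  induction s using Multiset.induction_on with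
  | empty => simp
  | cons i s ih => simp [ih, PowerSeries.monomial_mul_monomial]

theorem coeff_sum_monomial_pow {R : Type*} [CommSemiring R] (a : ℕ → R) (s : Finset ℕ)
    (n m : ℕ) :
    PowerSeries.coeff n ((∑ i ∈ s, PowerSeries.monomial i (a i)) ^ m) =
      ∑ k ∈ s.sym m with k.val.sum = n, k.val.countPerms * (k.val.map a).prod := by
  rw [sum_pow, map_sum, sum_filter]
  refine sum_congr rfl fun k _ => ?_
  rw [prod_map_monomial, ← nsmul_eq_mul, map_nsmul, PowerSeries.coeff_monomial, nsmul_eq_mul,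
    mul_ite, mul_zero]
  simp only [eq_comm]

theorem sum_sym_Icc_eq_sum_partition {M : Type*} [AddCommMonoid M] (F : Multiset ℕ → M)
    (n m : ℕ) :
    ∑ k ∈ (Icc 1 n).sym m with k.val.sum = n, F k.val =
      ∑ μ : n.Partition with μ.parts.card = m, F μ.parts := by
  symm
  refine sum_bij (fun μ hμ => ⟨μ.parts, (mem_filter.1 hμ).2⟩) ?_ ?_ ?_ fun _ _ => rfl
  · intro μ hμ
    refine mem_filter.2 ⟨mem_sym_iff.2 fun i hi => ?_, μ.parts_sum⟩
    exact mem_Icc.2 ⟨μ.parts_pos hi, μ.le_of_mem_parts hi⟩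
  · intro μ _ ν _ h
    exact Nat.Partition.ext (congrArg Subtype.val h)
  · intro k hk
    obtain ⟨hk, hsum⟩ := mem_filter.1 hk
    exact ⟨⟨k.1, fun {i} hi => (mem_Icc.1 (mem_sym_iff.1 hk i hi)).1, hsum⟩,
      mem_filter.2 ⟨mem_univ _, k.2⟩, rfl⟩

theorem trunc_succ_eq_sum_monomial {R : Type*} [CommSemiring R] {f : R⟦X⟧}
    (hf : PowerSeries.constantCoeff f = 0) (n : ℕ) :
    (PowerSeries.trunc (n + 1) f : R⟦X⟧) =
      ∑ i ∈ Icc 1 n, PowerSeries.monomial i (PowerSeries.coeff i f) := by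
  ext k
  simp only [Polynomial.coeff_coe, PowerSeries.coeff_trunc, map_sum, PowerSeries.coeff_monomial,
    sum_ite_eq, mem_Icc]
  cases k with
  | zero => simp [hf]
  | succ k => simp

theorem coeff_pow_eq_sum_partition {R : Type*} [CommSemiring R] {f : R⟦X⟧}
    (hf : PowerSeries.constantCoeff f = 0) (n m : ℕ) :
    PowerSeries.coeff n (f ^ m) =
      ∑ μ : n.Partition with μ.parts.card = m,
        μ.parts.countPerms * (μ.parts.map fun i => PowerSeries.coeff i f).prod := by
  rw [← PowerSeries.coeff_coe_trunc_of_lt n.lt_succ_self, ← PowerSeries.trunc_trunc_pow,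
    PowerSeries.coeff_coe_trunc_of_lt n.lt_succ_self, trunc_succ_eq_sum_monomial hf,
    coeff_sum_monomial_pow,
    sum_sym_Icc_eq_sum_partition fun s =>
      s.countPerms * (s.map fun i => PowerSeries.coeff i f).prod]

theorem coeff_subst_eq_sum_partition {R S : Type*} [CommRing R] [CommRing S] [Algebra R S]
    (g : R⟦X⟧) {f : S⟦X⟧} (hf : PowerSeries.constantCoeff f = 0) (n : ℕ) :
    PowerSeries.coeff n (g.subst f) =
      ∑ μ : n.Partition, PowerSeries.coeff μ.parts.card g •
        (μ.parts.countPerms * (μ.parts.map fun i => PowerSeries.coeff i f).prod) := by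
  rw [PowerSeries.coeff_subst' (.of_constantCoeff_zero' hf)]
  simp_rw [coeff_pow_eq_sum_partition hf]
  rw [finsum_eq_sum_of_support_subset (s := univ.image fun μ : n.Partition => μ.parts.card),
    ← sum_fiberwise_of_maps_to (g := fun μ : n.Partition => μ.parts.card)
      fun μ _ => mem_image_of_mem (fun μ => μ.parts.card) (mem_univ μ)]
  · refine sum_congr rfl fun m _ => ?_
    rw [smul_sum]
    refine sum_congr rfl fun μ hμ => ?_
    rw [(mem_filter.1 hμ).2]
  · intro m hm
    obtain ⟨μ, hμ, -⟩ := exists_ne_zero_of_sum_ne_zero (right_ne_zero_of_smul hm)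
    exact mem_coe.2 (mem_image.2 ⟨μ, mem_univ μ, (mem_filter.1 hμ).2⟩)

theorem eq_subst_mk_one {R : Type*} [CommRing R] {e f : R⟦X⟧}
    (hf : PowerSeries.constantCoeff f = 0) (he : e * (1 - f) = 1) :
    e = (PowerSeries.mk 1 : R⟦X⟧).subst f := by
  have hsubst : PowerSeries.HasSubst f := .of_constantCoeff_zero' hf
  have hgeom : (PowerSeries.mk 1 : R⟦X⟧).subst f * (1 - f) = 1 := by
    have h := congrArg (PowerSeries.substAlgHom hsubst) (PowerSeries.mk_one_mul_one_sub_eq_one R)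
    rwa [map_mul, map_sub, map_one, PowerSeries.substAlgHom_X, PowerSeries.coe_substAlgHom] at h
  exact left_inv_eq_right_inv he ((mul_comm _ _).trans hgeom)

theorem coeff_pow_of_mul_eq_one {R : Type*} [CommRing R] {e h : R⟦X⟧}
    (hh : PowerSeries.constantCoeff h = 1) (he : e * h = 1) (r n : ℕ) :
    PowerSeries.coeff n (e ^ r) =
      ∑ μ : n.Partition, (-1) ^ μ.parts.card *
        (r.multichoose μ.parts.card * μ.parts.countPerms) *
        (μ.parts.map fun i => PowerSeries.coeff i h).prod := by
  have hf : PowerSeries.constantCoeff (1 - h) = 0 := by simp [hh]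
  rw [eq_subst_mk_one (e := e) hf (by rwa [sub_sub_cancel]),
    ← PowerSeries.subst_pow (.of_constantCoeff_zero' hf), coeff_subst_eq_sum_partition _ hf]
  refine sum_congr rfl fun μ _ => ?_
  have hcoeff : ∀ i ∈ μ.parts, PowerSeries.coeff i (1 - h) = -PowerSeries.coeff i h := by
    intro i hi
    rw [map_sub, PowerSeries.coeff_one, if_neg (μ.parts_pos hi).ne', zero_sub]
  have hprod : (μ.parts.map fun i => PowerSeries.coeff i (1 - h)).prod =
      (-1) ^ μ.parts.card * (μ.parts.map fun i => PowerSeries.coeff i h).prod := by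
    rw [Multiset.map_congr rfl hcoeff]
    simpa using (μ.parts.map fun i => PowerSeries.coeff i h).prod_map_neg
  rw [hprod, coeff_mk_one_pow, smul_eq_mul]
  ring

section GeneratingFunctions

variable (σ R : Type*) [Fintype σ]

theorem mk_esymm_eq_prod [CommRing R] :
    PowerSeries.mk (esymm σ R) = ∏ i, PowerSeries.rescale (X i) (1 + PowerSeries.X) := by
  ext1 n
  simp_rw [map_add, map_one, PowerSeries.rescale_X, prod_one_add, prod_mul_distrib, prod_const,
    ← map_prod, map_sum, PowerSeries.coeff_C_mul_X_pow, PowerSeries.coeff_mk]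
  rw [esymm, powersetCard_eq_filter, sum_filter]
  simp only [eq_comm]

theorem sum_finsuppAntidiag_univ_eq_sum_sym {M : Type*} [AddCommMonoid M] [DecidableEq σ]
    (F : (σ →₀ ℕ) → M) (n : ℕ) :
    ∑ l ∈ finsuppAntidiag univ n, F l = ∑ s : Sym σ n, F (Multiset.toFinsupp s.1) := by
  symm
  refine sum_bij (fun s _ => Multiset.toFinsupp s.1) ?_ ?_ ?_ fun _ _ => rfl
  · intro s _
    exact mem_finsuppAntidiag'.2 ⟨(Multiset.toFinsupp_sum_eq s.1).trans s.2, subset_univ _⟩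
  · exact fun s _ t _ h => Subtype.ext (Multiset.toFinsupp.injective h)
  · intro l hl
    refine ⟨⟨Finsupp.toMultiset l, ?_⟩, mem_univ _, Finsupp.toMultiset_toFinsupp l⟩
    rw [Finsupp.card_toMultiset]
    exact (mem_finsuppAntidiag'.1 hl).1

theorem mk_hsymm_eq_prod [CommSemiring R] [DecidableEq σ] :
    PowerSeries.mk (hsymm σ R) = ∏ i, PowerSeries.rescale (X i) (PowerSeries.mk 1) := by
  ext1 n
  simp only [PowerSeries.coeff_prod, PowerSeries.rescale_mk, PowerSeries.coeff_mk, Pi.one_apply,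
    mul_one, hsymm]
  rw [sum_finsuppAntidiag_univ_eq_sum_sym σ fun l => ∏ i, (X i : MvPolynomial σ R) ^ l i]
  refine sum_congr rfl fun s _ => ?_
  rw [prod_multiset_map_count]
  refine prod_subset (subset_univ _) fun i _ hi => ?_
  rw [Multiset.count_eq_zero_of_notMem (by simpa using hi), pow_zero]

theorem rescale_mk_esymm_mul_mk_hsymm [CommRing R] [DecidableEq σ] :
    PowerSeries.rescale (-1) (PowerSeries.mk (esymm σ R)) * PowerSeries.mk (hsymm σ R) = 1 := by
  rw [mk_esymm_eq_prod, mk_hsymm_eq_prod, map_prod, ← prod_mul_distrib]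
  refine prod_eq_one fun i _ => ?_
  rw [PowerSeries.rescale_rescale, mul_comm (X i), ← PowerSeries.rescale_rescale, ← map_mul,
    map_add, map_one, PowerSeries.rescale_neg_one_X, ← sub_eq_add_neg, mul_comm,
    PowerSeries.mk_one_mul_one_sub_eq_one, map_one]

end GeneratingFunctions

theorem neg_one_pow_sub_card_parts {R : Type*} [Ring R] {n : ℕ} (μ : n.Partition) :
    (-1 : R) ^ (n - μ.parts.card) = (-1) ^ n * (-1) ^ μ.parts.card := by
  have hcard : μ.parts.card ≤ n := by
    simpa [μ.parts_sum] using
      Multiset.card_nsmul_le_sum (s := μ.parts) (a := 1) fun i hi => μ.parts_pos hi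
  rw [← pow_add]
  exact neg_one_pow_congr (by rw [Nat.even_sub hcard, Nat.even_add])

theorem cast_countPerms {α : Type*} [DecidableEq α] (K : Type*) [Field K] [CharZero K]
    (s : Multiset α) :
    (s.countPerms : K) = s.card.factorial / ∏ i ∈ s.toFinset, ((s.count i).factorial : K) := by
  have hspec : (∏ i ∈ s.toFinset, (s.count i).factorial) * s.countPerms = s.card.factorial := by
    rw [← Multiset.toFinset_sum_count_eq s]
    exact Nat.multinomial_spec s.toFinset fun i => s.count i
  rw [← hspec, Nat.cast_mul, Nat.cast_prod, mul_div_cancel_left₀]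
  exact prod_ne_zero_iff.2 fun i _ => Nat.cast_ne_zero.2 (Nat.factorial_ne_zero _)

theorem cast_three_multichoose (K : Type*) [Field K] [CharZero K] (m : ℕ) :
    (Nat.multichoose 3 m : K) = 1 / 2 * ((m + 2).factorial / m.factorial) := by
  rw [Nat.multichoose_eq, show 3 + m - 1 = m + 2 by lia, Nat.cast_add_choose, Nat.factorial_two]
  push_cast
  field_simp

theorem three_multichoose_mul_countPerms {α : Type*} [DecidableEq α] (K : Type*) [Field K]
    [CharZero K] (s : Multiset α) :
    (Nat.multichoose 3 s.card * s.countPerms : K) =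
      1 / 2 * ((s.card + 2).factorial / ∏ i ∈ s.toFinset, ((s.count i).factorial : K)) := by
  rw [cast_three_multichoose, cast_countPerms, mul_assoc,
    div_mul_div_cancel₀ (Nat.cast_ne_zero.2 (Nat.factorial_ne_zero _))]

theorem sum_esymm_triple_eq_sum_hsymm_general (σ R : Type*) [Fintype σ] [DecidableEq σ]
    [CommRing R] (r n : ℕ) :
    ∑ v ∈ Finset.Nat.antidiagonalTuple r n, ∏ i, esymm σ R (v i) =
      ∑ μ : n.Partition,
        ((-1) ^ (n - μ.parts.card) * (r.multichoose μ.parts.card * μ.parts.countPerms) : R) •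
          hsymmPart σ R μ := by
  have hsigned := coeff_pow_of_mul_eq_one (by simp) (rescale_mk_esymm_mul_mk_hsymm σ R) r n
  rw [← map_pow, PowerSeries.coeff_rescale, coeff_pow_eq_sum_antidiagonalTuple] at hsigned
  simp only [PowerSeries.coeff_mk] at hsigned
  calc
    _ = (-1) ^ n * ((-1) ^ n * ∑ v ∈ Finset.Nat.antidiagonalTuple r n, ∏ i, esymm σ R (v i)) := by
      rw [← mul_assoc, ← mul_pow, neg_one_mul, neg_neg, one_pow, one_mul]
    _ = _ := by
      rw [hsigned, mul_sum]
      refine sum_congr rfl fun μ _ => ?_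
      rw [neg_one_pow_sub_card_parts, Algebra.smul_def]
      simp [hsymmPart, mul_assoc]

/-- **Lemma 2, first identity.** For `n ≥ 1`, in any finite number of variables,
`∑_{i+j+k=n} e_i e_j e_k
  = (1/2) ∑_{μ ⊢ n} (-1)^{n-ℓ(μ)} ((ℓ(μ)+2)! / ∏_i m_i(μ)!) h_μ` over `ℚ`. -/
theorem sum_esymm_triple_eq_sum_hsymm (n : ℕ) (hn : 1 ≤ n)
    (σ : Type*) [Fintype σ] [DecidableEq σ] :
    ∑ v ∈ Finset.Nat.antidiagonalTuple 3 n,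
        esymm σ ℚ (v 0) * esymm σ ℚ (v 1) * esymm σ ℚ (v 2) =
    (1 / 2 : ℚ) • ∑ μ : n.Partition,
      ((-1 : ℚ) ^ (n - μ.parts.card) *
        (((μ.parts.card + 2).factorial : ℚ) /
          ∏ i ∈ μ.parts.toFinset, ((μ.parts.count i).factorial : ℚ))) •
        hsymmPart σ ℚ μ := by
  simpa only [Fin.prod_univ_three, three_multichoose_mul_countPerms, mul_left_comm _ (1 / 2 : ℚ),
    mul_smul, ← smul_sum] using sum_esymm_triple_eq_sum_hsymm_general σ ℚ 3 n
end

section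
/- In any finite number of variables, the following identity of symmetric polynomials over ℚ holds: 2·p_2·p_1² + p_1⁴ + 12·p_2·p_1 + 8·p_1³ + 15·p_2 + 20·p_1² + 18·p_1 = 3·m_{(4)} + 8·m_{(3,1)} + 10·m_{(2,2)} + 16·m_{(2,1,1)} + 24·m_{(1,1,1,1)} + 20·m_{(3)} + 36·m_{(2,1)} + 48·m_{(1,1,1)} + 35·m_{(2)} + 40·m_{(1,1)} + 18·m_{(1)}. (Equivalently, the inhomogeneous symmetric function f_2 := (1/5760)(2p_2p_1² + p_1⁴ + 12p_2p_1 + 8p_1³ + 15p_2 + 20p_1² + 18p_1) has nonnegative coefficients in the monomial symmetric function basis, with 5760·f_2 given by the right-hand side.) -/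
/-!
The monomial expansion of a product of power sums can be computed one factor at a time. The
coefficient of `x ^ d` in `p_k φ` is the sum, over the indices `i` with `k ≤ d i`, of the
coefficient of `x ^ d / x_i ^ k` in `φ`. By symmetry only the multiset of nonzero exponents
matters, so the coefficient of `m_μ` in `p_{l₁} ⋯ p_{lᵣ}` satisfies a recursion on `l` that lowers
one part of `μ` at a time. Evaluating it at the partitions of `n ≤ 4` gives the expansions of the
seven products that occur.
-/

open MvPolynomial Finset

section ExponentParts

variable {σ : Type*}

/-- The type of the monomial `x ^ d`: the multiset of its nonzero exponents. It is the partition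
indexing the monomial symmetric polynomial in which `x ^ d` occurs. -/
def exponentParts (d : σ →₀ ℕ) : Multiset ℕ :=
  d.support.val.map d

theorem exponentParts_eq_zero {d : σ →₀ ℕ} : exponentParts d = 0 ↔ d = 0 := by
  rw [exponentParts, Multiset.map_eq_zero, val_eq_zero, Finsupp.support_eq_empty]

theorem exponentParts_eq_cons_erase {d : σ →₀ ℕ} {i : σ} (hi : d i ≠ 0) :
    exponentParts d = d i ::ₘ exponentParts (d.erase i) := by
  classical
  have hmem : i ∈ d.support.val := Finsupp.mem_support_iff.2 hi
  have heq : ∀ j ∈ d.support.val.erase i, d j = d.erase i j := fun j hj ↦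
    (Finsupp.erase_ne (d.support.nodup.mem_erase_iff.1 hj).1).symm
  rw [exponentParts, ← Multiset.cons_erase hmem, Multiset.map_cons, Multiset.map_congr rfl heq,
    exponentParts, Finsupp.support_erase, erase_val]

theorem exponentParts_tsub_single (d : σ →₀ ℕ) {i : σ} (k : ℕ) (hi : d i ≠ 0) :
    exponentParts (d - Finsupp.single i k) =
      if d i ≤ k then (exponentParts d).erase (d i)
      else (d i - k) ::ₘ (exponentParts d).erase (d i) := by
  have herase : (d - Finsupp.single i k).erase i = d.erase i := by
    ext j
    by_cases hj : j = i <;> simp [hj]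
  have hval : (d - Finsupp.single i k) i = d i - k := by simp
  rw [exponentParts_eq_cons_erase hi, Multiset.erase_cons_head]
  split_ifs with h
  · rw [← herase, Finsupp.erase_of_notMem_support]
    rw [Finsupp.notMem_support_iff, hval, Nat.sub_eq_zero_of_le h]
  · rw [exponentParts_eq_cons_erase (i := i) (by omega), herase, hval]

end ExponentParts

section SumMsymm

variable {σ R : Type*} [DecidableEq σ] [CommSemiring R]

theorem prod_map_X_eq_monomial (s : Multiset σ) :
    (s.map (X : σ → MvPolynomial σ R)).prod = monomial s.toFinsupp 1 := by
  rw [prod_multiset_map_count, ← prod_X_pow_eq_monomial, Multiset.toFinsupp_support]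
  simp only [Multiset.toFinsupp_apply]

variable [Fintype σ] {n : ℕ} {φ : MvPolynomial σ R}

theorem eq_sum_sym_of_isHomogeneous (hφ : φ.IsHomogeneous n) :
    φ = ∑ s : Sym σ n, monomial (Multiset.toFinsupp (s : Multiset σ))
      (coeff (Multiset.toFinsupp (s : Multiset σ)) φ) := by
  have degree_toFinsupp (s : Multiset σ) : s.toFinsupp.degree = s.card := s.toFinsupp_sum_eq
  ext d
  simp only [coeff_sum, coeff_monomial]
  by_cases hd : d.degree = n
  · obtain ⟨t, rfl⟩ : ∃ t : Sym σ n, Multiset.toFinsupp (t : Multiset σ) = d :=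
      ⟨⟨Finsupp.toMultiset d, by rw [← degree_toFinsupp, Finsupp.toMultiset_toFinsupp, hd]⟩,
        Finsupp.toMultiset_toFinsupp d⟩
    simp only [EmbeddingLike.apply_eq_iff_eq, Sym.coe_inj, sum_ite_eq', mem_univ, if_true]
  · rw [hφ.coeff_eq_zero hd, sum_eq_zero]
    rintro s -
    refine if_neg fun hs ↦ hd ?_
    rw [← hs, degree_toFinsupp, Sym.card_coe]

theorem eq_sum_msymm_of_isHomogeneous (hφ : φ.IsHomogeneous n) (c : n.Partition → R)
    (hc : ∀ s : Sym σ n, coeff (Multiset.toFinsupp (s : Multiset σ)) φ = c (.ofSym s)) :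
    φ = ∑ μ, c μ • msymm σ R μ := by
  rw [eq_sum_sym_of_isHomogeneous hφ, ← sum_fiberwise _ fun s : Sym σ n ↦ Nat.Partition.ofSym s]
  refine sum_congr rfl fun μ _ ↦ ?_
  rw [msymm, smul_sum, sum_subtype (p := fun s : Sym σ n ↦ .ofSym s = μ) _ (by simp)]
  refine sum_congr rfl fun s _ ↦ ?_
  rw [prod_map_X_eq_monomial, smul_monomial, smul_eq_mul, mul_one, hc, s.2]
  rfl

end SumMsymm

section PowerSums

/-- The coefficient of `m_ρ` in `∏ k ∈ l, p_k`, for positive `k`: the number of ways to exhaust the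
parts of `ρ` by subtracting each entry of `l` from one of them. Parts that reach `0` are removed, so
that `ρ` remains the type of a monomial. -/
def psumCoeff : List ℕ → Multiset ℕ → ℕ
  | [], ρ => if ρ = 0 then 1 else 0
  | k :: l, ρ =>
    (ρ.map fun a ↦
      if k ≤ a then psumCoeff l (if a ≤ k then ρ.erase a else (a - k) ::ₘ ρ.erase a) else 0).sum

variable {σ : Type*}

theorem psumCoeff_cons_exponentParts (k : ℕ) (l : List ℕ) (d : σ →₀ ℕ) :
    psumCoeff (k :: l) (exponentParts d) =
      ∑ i ∈ d.support,
        if k ≤ d i then psumCoeff l (exponentParts (d - Finsupp.single i k)) else 0 := by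
  refine (congrArg Multiset.sum (Multiset.map_map _ _ _)).trans (sum_congr rfl fun i hi ↦ ?_)
  rw [exponentParts_tsub_single d k (Finsupp.mem_support_iff.1 hi), Function.comp_apply]

variable {R : Type*} [Fintype σ] [CommSemiring R]

theorem coeff_psum_mul (k : ℕ) (φ : MvPolynomial σ R) (d : σ →₀ ℕ) :
    coeff d (psum σ R k * φ) =
      ∑ i, if k ≤ d i then coeff (d - Finsupp.single i k) φ else 0 := by
  simp only [psum, sum_mul, coeff_sum, X_pow_eq_monomial, coeff_monomial_mul', one_mul,
    Finsupp.single_le_iff]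

theorem coeff_prod_map_psum {l : List ℕ} (hl : ∀ k ∈ l, 0 < k) (d : σ →₀ ℕ) :
    coeff d (l.map (psum σ R)).prod = (psumCoeff l (exponentParts d) : R) := by
  induction l generalizing d with
  | nil =>
    classical
    simp [psumCoeff, coeff_one, exponentParts_eq_zero, eq_comm]
  | cons k l ih =>
    obtain ⟨hk, hl⟩ := List.forall_mem_cons.1 hl
    have hsupport : ∀ i ∉ d.support, ¬ k ≤ d i := fun i hi ↦ by
      rw [Finsupp.notMem_support_iff.1 hi]
      exact hk.not_ge
    rw [List.map_cons, List.prod_cons, coeff_psum_mul, psumCoeff_cons_exponentParts, Nat.cast_sum,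
      ← sum_subset (subset_univ d.support) fun i _ hi ↦ if_neg (hsupport i hi)]
    simp only [ih hl, Nat.cast_ite, Nat.cast_zero]

theorem isHomogeneous_psum (k : ℕ) : (psum σ R k).IsHomogeneous k :=
  IsHomogeneous.sum _ _ _ fun i _ ↦ isHomogeneous_X_pow i k

theorem isHomogeneous_prod_map_psum (l : List ℕ) :
    (l.map (psum σ R)).prod.IsHomogeneous l.sum := by
  induction l with
  | nil => exact isHomogeneous_one σ R
  | cons k l ih => exact (isHomogeneous_psum k).mul ih

theorem prod_map_psum_eq_sum_msymm [DecidableEq σ] {l : List ℕ} {n : ℕ} (hl : ∀ k ∈ l, 0 < k)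
    (hn : l.sum = n) :
    (l.map (psum σ R)).prod = ∑ μ : n.Partition, psumCoeff l μ.parts • msymm σ R μ := by
  simp only [← Nat.cast_smul_eq_nsmul R]
  exact eq_sum_msymm_of_isHomogeneous (hn ▸ isHomogeneous_prod_map_psum l) _
    fun s ↦ coeff_prod_map_psum hl (Multiset.toFinsupp (s : Multiset σ))

end PowerSums

section Partitions

-- The hypothesis ranges over an explicit finite set, so it can be decided for a given `n`.
theorem eq_univ_of_forall_mem_sym {n : ℕ} {S : Finset n.Partition}
    (h : ∀ k ≤ n, ∀ s ∈ (Icc 1 n).sym k, s.1.sum = n → ∃ μ ∈ S, μ.parts = s.1) : S = univ := by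
  refine eq_univ_of_forall fun ν ↦ ?_
  have hcard : ν.parts.card ≤ n := by
    simpa [ν.parts_sum] using Multiset.card_nsmul_le_sum (a := 1) fun _ ↦ ν.parts_pos
  have hmem : (⟨ν.parts, rfl⟩ : Sym ℕ ν.parts.card) ∈ (Icc 1 n).sym ν.parts.card :=
    mem_sym_iff.2 fun a ha ↦ mem_Icc.2 ⟨ν.parts_pos ha, ν.le_of_mem_parts ha⟩
  obtain ⟨μ, hμ, hμν⟩ := h _ hcard _ hmem ν.parts_sum
  rwa [← Nat.Partition.ext hμν]

variable {M : Type*} [AddCommMonoid M]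

theorem sum_partition_one (f : Nat.Partition 1 → M) :
    ∑ μ, f μ = f ⟨{1}, by decide, by decide⟩ :=
  Fintype.sum_unique f

theorem sum_partition_two (f : Nat.Partition 2 → M) :
    ∑ μ, f μ = f ⟨{2}, by decide, by decide⟩ + f ⟨{1, 1}, by decide, by decide⟩ := by
  have huniv : ({⟨{2}, by decide, by decide⟩, ⟨{1, 1}, by decide, by decide⟩} :
      Finset (Nat.Partition 2)) = univ :=
    eq_univ_of_forall_mem_sym (by decide +kernel)
  rw [← huniv, sum_pair (by decide)]

theorem sum_partition_three (f : Nat.Partition 3 → M) :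
    ∑ μ, f μ = f ⟨{3}, by decide, by decide⟩ + f ⟨{2, 1}, by decide, by decide⟩
      + f ⟨{1, 1, 1}, by decide, by decide⟩ := by
  have huniv : ({⟨{3}, by decide, by decide⟩, ⟨{2, 1}, by decide, by decide⟩,
      ⟨{1, 1, 1}, by decide, by decide⟩} :
      Finset (Nat.Partition 3)) = univ :=
    eq_univ_of_forall_mem_sym (by decide +kernel)
  rw [← huniv, sum_insert (by decide), sum_pair (by decide), add_assoc]

theorem sum_partition_four (f : Nat.Partition 4 → M) :
    ∑ μ, f μ = f ⟨{4}, by decide, by decide⟩ + f ⟨{3, 1}, by decide, by decide⟩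
      + f ⟨{2, 2}, by decide, by decide⟩ + f ⟨{2, 1, 1}, by decide, by decide⟩
      + f ⟨{1, 1, 1, 1}, by decide, by decide⟩ := by
  have huniv : ({⟨{4}, by decide, by decide⟩, ⟨{3, 1}, by decide, by decide⟩,
      ⟨{2, 2}, by decide, by decide⟩, ⟨{2, 1, 1}, by decide, by decide⟩,
      ⟨{1, 1, 1, 1}, by decide, by decide⟩} :
      Finset (Nat.Partition 4)) = univ :=
    eq_univ_of_forall_mem_sym (by decide +kernel)
  rw [← huniv, sum_insert (by decide), sum_insert (by decide), sum_insert (by decide),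
    sum_pair (by decide)]
  simp only [add_assoc]

end Partitions

section Expansions

variable (σ R : Type*) [Fintype σ] [DecidableEq σ] [CommSemiring R]

theorem psum_one_eq_msymm :
    psum σ R 1 =
      msymm σ R (⟨{1}, by decide, by decide⟩ : Nat.Partition 1) := by
  simpa [psumCoeff, pow_succ, mul_assoc, -psum_one, -msymm_one] using
    (prod_map_psum_eq_sum_msymm (σ := σ) (R := R) (l := [1]) (by decide) rfl).trans
      (sum_partition_one _)

theorem psum_two_eq_msymm :
    psum σ R 2 =
      msymm σ R (⟨{2}, by decide, by decide⟩ : Nat.Partition 2) := by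
  simpa [psumCoeff, pow_succ, mul_assoc, -psum_one, -msymm_one] using
    (prod_map_psum_eq_sum_msymm (σ := σ) (R := R) (l := [2]) (by decide) rfl).trans
      (sum_partition_two _)

theorem psum_one_sq_eq_sum_msymm :
    psum σ R 1 ^ 2 =
      msymm σ R (⟨{2}, by decide, by decide⟩ : Nat.Partition 2)
        + 2 * msymm σ R (⟨{1, 1}, by decide, by decide⟩ : Nat.Partition 2) := by
  simpa [psumCoeff, pow_succ, mul_assoc, -psum_one, -msymm_one] using
    (prod_map_psum_eq_sum_msymm (σ := σ) (R := R) (l := [1, 1]) (by decide) rfl).trans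
      (sum_partition_two _)

theorem psum_two_mul_psum_one_eq_sum_msymm :
    psum σ R 2 * psum σ R 1 =
      msymm σ R (⟨{3}, by decide, by decide⟩ : Nat.Partition 3)
        + msymm σ R (⟨{2, 1}, by decide, by decide⟩ : Nat.Partition 3) := by
  simpa [psumCoeff, pow_succ, mul_assoc, -psum_one, -msymm_one] using
    (prod_map_psum_eq_sum_msymm (σ := σ) (R := R) (l := [2, 1]) (by decide) rfl).trans
      (sum_partition_three _)

theorem psum_one_cube_eq_sum_msymm :
    psum σ R 1 ^ 3 =
      msymm σ R (⟨{3}, by decide, by decide⟩ : Nat.Partition 3)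
        + 3 * msymm σ R (⟨{2, 1}, by decide, by decide⟩ : Nat.Partition 3)
        + 6 * msymm σ R (⟨{1, 1, 1}, by decide, by decide⟩ : Nat.Partition 3) := by
  simpa [psumCoeff, pow_succ, mul_assoc, -psum_one, -msymm_one] using
    (prod_map_psum_eq_sum_msymm (σ := σ) (R := R) (l := [1, 1, 1]) (by decide) rfl).trans
      (sum_partition_three _)

theorem psum_two_mul_psum_one_sq_eq_sum_msymm :
    psum σ R 2 * psum σ R 1 ^ 2 =
      msymm σ R (⟨{4}, by decide, by decide⟩ : Nat.Partition 4)
        + 2 * msymm σ R (⟨{3, 1}, by decide, by decide⟩ : Nat.Partition 4)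
        + 2 * msymm σ R (⟨{2, 2}, by decide, by decide⟩ : Nat.Partition 4)
        + 2 * msymm σ R (⟨{2, 1, 1}, by decide, by decide⟩ : Nat.Partition 4) := by
  simpa [psumCoeff, pow_succ, mul_assoc, -psum_one, -msymm_one] using
    (prod_map_psum_eq_sum_msymm (σ := σ) (R := R) (l := [2, 1, 1]) (by decide) rfl).trans
      (sum_partition_four _)

theorem psum_one_pow_four_eq_sum_msymm :
    psum σ R 1 ^ 4 =
      msymm σ R (⟨{4}, by decide, by decide⟩ : Nat.Partition 4)
        + 4 * msymm σ R (⟨{3, 1}, by decide, by decide⟩ : Nat.Partition 4)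
        + 6 * msymm σ R (⟨{2, 2}, by decide, by decide⟩ : Nat.Partition 4)
        + 12 * msymm σ R (⟨{2, 1, 1}, by decide, by decide⟩ : Nat.Partition 4)
        + 24 * msymm σ R (⟨{1, 1, 1, 1}, by decide, by decide⟩ : Nat.Partition 4) := by
  simpa [psumCoeff, pow_succ, mul_assoc, -psum_one, -msymm_one] using
    (prod_map_psum_eq_sum_msymm (σ := σ) (R := R) (l := [1, 1, 1, 1]) (by decide) rfl).trans
      (sum_partition_four _)

end Expansions

theorem f2_monomial_expansion_general (σ R : Type*) [Fintype σ] [DecidableEq σ]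
    [CommSemiring R] :
    2 * psum σ R 2 * (psum σ R 1) ^ 2 + (psum σ R 1) ^ 4
      + 12 * psum σ R 2 * psum σ R 1 + 8 * (psum σ R 1) ^ 3
      + 15 * psum σ R 2 + 20 * (psum σ R 1) ^ 2 + 18 * psum σ R 1 =
    3 * msymm σ R (⟨{4}, by decide, by decide⟩ : Nat.Partition 4)
      + 8 * msymm σ R (⟨{3,1}, by decide, by decide⟩ : Nat.Partition 4)
      + 10 * msymm σ R (⟨{2,2}, by decide, by decide⟩ : Nat.Partition 4)
      + 16 * msymm σ R (⟨{2,1,1}, by decide, by decide⟩ : Nat.Partition 4)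
      + 24 * msymm σ R (⟨{1,1,1,1}, by decide, by decide⟩ : Nat.Partition 4)
      + 20 * msymm σ R (⟨{3}, by decide, by decide⟩ : Nat.Partition 3)
      + 36 * msymm σ R (⟨{2,1}, by decide, by decide⟩ : Nat.Partition 3)
      + 48 * msymm σ R (⟨{1,1,1}, by decide, by decide⟩ : Nat.Partition 3)
      + 35 * msymm σ R (⟨{2}, by decide, by decide⟩ : Nat.Partition 2)
      + 40 * msymm σ R (⟨{1,1}, by decide, by decide⟩ : Nat.Partition 2)
      + 18 * msymm σ R (⟨{1}, by decide, by decide⟩ : Nat.Partition 1) := by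
  rw [mul_assoc 2, mul_assoc 12, psum_two_mul_psum_one_sq_eq_sum_msymm,
    psum_one_pow_four_eq_sum_msymm, psum_two_mul_psum_one_eq_sum_msymm,
    psum_one_cube_eq_sum_msymm, psum_two_eq_msymm, psum_one_sq_eq_sum_msymm, psum_one_eq_msymm]
  ring

/-- **Theorem 1 (monomial expansion of `5760 f₂`).** In any finite number of variables over `ℚ`:
`2p₂p₁² + p₁⁴ + 12p₂p₁ + 8p₁³ + 15p₂ + 20p₁² + 18p₁
 = 3m₄ + 8m₃₁ + 10m₂₂ + 16m₂₁₁ + 24m₁₁₁₁ + 20m₃ + 36m₂₁ + 48m₁₁₁ + 35m₂ + 40m₁₁ + 18m₁`. -/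
theorem f2_monomial_expansion (σ : Type*) [Fintype σ] [DecidableEq σ] :
    2 * psum σ ℚ 2 * (psum σ ℚ 1) ^ 2 + (psum σ ℚ 1) ^ 4
      + 12 * psum σ ℚ 2 * psum σ ℚ 1 + 8 * (psum σ ℚ 1) ^ 3
      + 15 * psum σ ℚ 2 + 20 * (psum σ ℚ 1) ^ 2 + 18 * psum σ ℚ 1 =
    3 * msymm σ ℚ (⟨{4}, by decide, by decide⟩ : Nat.Partition 4)
      + 8 * msymm σ ℚ (⟨{3,1}, by decide, by decide⟩ : Nat.Partition 4)
      + 10 * msymm σ ℚ (⟨{2,2}, by decide, by decide⟩ : Nat.Partition 4)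
      + 16 * msymm σ ℚ (⟨{2,1,1}, by decide, by decide⟩ : Nat.Partition 4)
      + 24 * msymm σ ℚ (⟨{1,1,1,1}, by decide, by decide⟩ : Nat.Partition 4)
      + 20 * msymm σ ℚ (⟨{3}, by decide, by decide⟩ : Nat.Partition 3)
      + 36 * msymm σ ℚ (⟨{2,1}, by decide, by decide⟩ : Nat.Partition 3)
      + 48 * msymm σ ℚ (⟨{1,1,1}, by decide, by decide⟩ : Nat.Partition 3)
      + 35 * msymm σ ℚ (⟨{2}, by decide, by decide⟩ : Nat.Partition 2)
      + 40 * msymm σ ℚ (⟨{1,1}, by decide, by decide⟩ : Nat.Partition 2)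
      + 18 * msymm σ ℚ (⟨{1}, by decide, by decide⟩ : Nat.Partition 1) :=
  f2_monomial_expansion_general σ ℚ
end

section
/- Let R be a commutative ℚ-algebra, let a, b, c ∈ R, and let q_1, q_2, q_3, … be any sequence of elements of R. Define C_0 = 1 and, for m ≥ 1, C_m = Σ_{μ ⊢ m} Π_{i≥1} q_i^{m_i(μ)} / m_i(μ)!. Then for every integer n ≥ 1: Σ_{(i,j,k)∈ℕ³, i+j+k=n} (a + b·i + c·i²) · C_i·C_j·C_k = Σ_{μ ⊢ n} 3^{ℓ(μ)} · (a + (b/3)·n + (c/9)·(n² + 2·p_2(μ))) · Π_{i≥1} q_i^{m_i(μ)} / m_i(μ)!. -/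
open Finset

/-!
For a sequence `r`, let `E_r = exp (∑ rᵢ Xⁱ)`, whose `m`-th coefficient is
`∑_{μ ⊢ m} ∏ᵢ rᵢ^{mᵢ(μ)}/mᵢ(μ)!`. Removing one part from a partition shows that
`∑_{μ ⊢ n} (∑_j f(μ_j)) ∏ᵢ rᵢ^{mᵢ(μ)}/mᵢ(μ)! = [Xⁿ] (∑ f(i) rᵢ Xⁱ) E_r`.
For `f(i) = i` this reads `θ E_r = G_r E_r`, where `θ = X d/dX` and `G_r = ∑ i rᵢ Xⁱ`. This
equation determines `E_r` up to its constant coefficient, hence `E_{kq} = E_qᵏ`.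

The factors `i` and `i²` in the convolution turn one factor `E = E_q` into `θE` and `θ²E`, and with
`G = G_q` and `k + 1` factors in total,
`(k + 1) θE Eᵏ = θ(Eᵏ⁺¹)` and `(k + 1)² θ²E Eᵏ = θ²(Eᵏ⁺¹) + k (k + 1) θG Eᵏ⁺¹`.
Here `θ` and `θ²` contribute `n` and `n²`, and the removal identity for `f(i) = i²` and
`r = (k + 1) q` recognises `(k + 1) θG Eᵏ⁺¹` as the generating series of the weighted sums of `p₂`.
-/

namespace QuadraticConvolution

open PowerSeries
open scoped Nat

section Derivation

variable {R A : Type*} [CommSemiring R] [CommSemiring A] [Algebra R A] (D : Derivation R A A)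

lemma derivation_pow_succ (E : A) (k : ℕ) : D (E ^ (k + 1)) = (k + 1) • (D E * E ^ k) := by
  rw [D.leibniz_pow, Nat.add_sub_cancel, smul_eq_mul, mul_comm]

variable {D} {E G : A}

lemma derivation_pow_of_eq_mul (h : D E = G * E) (k : ℕ) : D (E ^ k) = k • G * E ^ k := by
  cases k with
  | zero => simp
  | succ k => rw [derivation_pow_succ, h, pow_succ', smul_mul_assoc, mul_assoc]

lemma sq_nsmul_derivation_derivation_mul_pow (h : D E = G * E) (k : ℕ) :
    (k + 1) ^ 2 • (D (D E) * E ^ k) =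
      D (D (E ^ (k + 1))) + k • ((k + 1) • D G * E ^ (k + 1)) := by
  have hDD : D (D E) = D G * E + G * (G * E) := by
    rw [h, D.leibniz, h, smul_eq_mul, smul_eq_mul]; ring
  have hDDpow : D (D (E ^ (k + 1))) =
      (k + 1) • D G * E ^ (k + 1) + (k + 1) • G * ((k + 1) • G * E ^ (k + 1)) := by
    rw [derivation_pow_of_eq_mul h, D.leibniz, derivation_pow_of_eq_mul h, map_nsmul, smul_eq_mul,
      smul_eq_mul]
    ring
  rw [hDD, hDDpow]
  simp only [nsmul_eq_mul]
  push_cast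
  ring

end Derivation

section Euler

variable {R : Type*} [CommSemiring R]

variable (R) in
/-- The Euler operator `θ = X d/dX` on power series. -/
noncomputable def euler : Derivation R R⟦X⟧ R⟦X⟧ := (X : R⟦X⟧) • derivative R

lemma coeff_euler (F : R⟦X⟧) (n : ℕ) : coeff n (euler R F) = n • coeff n F := by
  cases n with
  | zero => simp [euler]
  | succ n => simp [euler, coeff_succ_X_mul, coeff_derivative, mul_comm]

lemma succ_nsmul_coeff_euler_mul_pow (E : R⟦X⟧) (k n : ℕ) :
    (k + 1) • coeff n (euler R E * E ^ k) = n • coeff n (E ^ (k + 1)) := by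
  rw [← map_nsmul, ← derivation_pow_succ, coeff_euler]

lemma eq_of_euler_eq_mul [IsAddTorsionFree R] {F G H : R⟦X⟧} (hG : constantCoeff G = 0)
    (h0 : constantCoeff F = constantCoeff H) (hF : euler R F = G * F) (hH : euler R H = G * H) :
    F = H := by
  ext n
  induction n using Nat.strong_induction_on with
  | _ n ih =>
    obtain rfl | hn := eq_or_ne n 0
    · simpa using h0
    refine nsmul_right_injective hn ?_
    simp only [← coeff_euler, hF, hH, coeff_mul]
    refine sum_congr rfl fun p hp => ?_
    obtain hp1 | hp1 := eq_or_ne p.1 0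
    · simp [hp1, hG]
    · rw [ih p.2 (by have := mem_antidiagonal.1 hp; lia)]

lemma coeff_prod_fin {k : ℕ} (F : Fin k → R⟦X⟧) (n : ℕ) :
    coeff n (∏ i, F i) = ∑ v ∈ Nat.antidiagonalTuple k n, ∏ i, coeff (v i) (F i) := by
  rw [coeff_prod]
  refine sum_nbij' (fun l => ⇑l) Finsupp.equivFunOnFinite.symm ?_ ?_ ?_ ?_ ?_ <;>
    simp [Nat.mem_antidiagonalTuple]

lemma coeff_mul_pow (F E : R⟦X⟧) (k n : ℕ) :
    coeff n (F * E ^ k) = ∑ v ∈ Nat.antidiagonalTuple (k + 1) n,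
      coeff (v 0) F * ∏ i : Fin k, coeff (v i.succ) E := by
  simpa [Fin.prod_univ_succ] using coeff_prod_fin (Fin.cons F fun _ : Fin k => E) n

lemma sum_antidiagonalTuple_quadratic_mul_prod (a b c : R) (E : R⟦X⟧) (k n : ℕ) :
    ∑ v ∈ Nat.antidiagonalTuple (k + 1) n,
        (a + v 0 • b + v 0 ^ 2 • c) * ∏ i, coeff (v i) E =
      a * coeff n (E ^ (k + 1)) + b * coeff n (euler R E * E ^ k) +
        c * coeff n (euler R (euler R E) * E ^ k) := by
  rw [pow_succ' E k]
  simp only [coeff_mul_pow, coeff_euler, mul_sum, ← sum_add_distrib, Fin.prod_univ_succ,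
    nsmul_eq_mul, Nat.cast_pow]
  exact sum_congr rfl fun v _ => by ring

end Euler

section PartitionWeight

variable {R : Type*} [CommRing R] [Algebra ℚ R]

/-- The weight `∏ᵢ rᵢ^{mᵢ}/mᵢ!` of a multiset `s`, where `mᵢ` is the multiplicity of `i` in `s`. -/
noncomputable def weight (r : ℕ → R) (s : Multiset ℕ) : R :=
  s.toFinsupp.prod fun i m => (m ! : ℚ)⁻¹ • r i ^ m

/-- The generating series `E_r = exp (∑ rᵢ Xⁱ)`, encoded through its coefficients: the total weights
of the partitions of each number. -/
noncomputable def genSeries (r : ℕ → R) : R⟦X⟧ :=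
  Nat.Partition.genFun fun i m => (m ! : ℚ)⁻¹ • r i ^ m

lemma coeff_genSeries (r : ℕ → R) (n : ℕ) :
    coeff n (genSeries r) = ∑ μ : n.Partition, weight r μ.parts :=
  Nat.Partition.coeff_genFun _ n

lemma constantCoeff_genSeries (r : ℕ → R) : constantCoeff (genSeries r) = 1 := by
  rw [← coeff_zero_eq_constantCoeff_apply, coeff_genSeries]
  simp [weight]

lemma weight_nsmul (k : ℕ) (r : ℕ → R) (s : Multiset ℕ) :
    weight (k • r) s = k ^ s.card • weight r s := by
  simp only [weight, ← s.toFinsupp_sum_eq, Finsupp.prod, Finsupp.sum, id_eq,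
    ← prod_pow_eq_pow_sum, ← prod_smul, Pi.smul_apply, smul_pow, smul_comm (k ^ _)]

lemma succ_nsmul_inv_factorial_smul_pow (x : R) (m : ℕ) :
    (m + 1) • (((m + 1)! : ℚ)⁻¹ • x ^ (m + 1)) = x * ((m ! : ℚ)⁻¹ • x ^ m) := by
  have hm : ((m + 1 : ℕ) : ℚ) * ((m + 1)! : ℚ)⁻¹ = (m ! : ℚ)⁻¹ := by
    rw [Nat.factorial_succ]
    push_cast
    field_simp
  rw [← Nat.cast_smul_eq_nsmul ℚ, smul_smul, hm, pow_succ', mul_smul_comm]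

lemma count_nsmul_weight_cons (r : ℕ → R) (i : ℕ) (s : Multiset ℕ) :
    (i ::ₘ s).count i • weight r (i ::ₘ s) = r i * weight r s := by
  have herase : (i ::ₘ s).toFinsupp.erase i = s.toFinsupp.erase i := by
    rw [← Multiset.singleton_add, map_add, Finsupp.erase_add, Multiset.toFinsupp_singleton,
      Finsupp.erase_single, zero_add]
  rw [weight, weight, ← Finsupp.mul_prod_erase' _ i _ (by simp),
    ← Finsupp.mul_prod_erase' s.toFinsupp i _ (by simp), herase, Multiset.toFinsupp_apply,
    Multiset.toFinsupp_apply, Multiset.count_cons_self, ← smul_mul_assoc,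
    succ_nsmul_inv_factorial_smul_pow, mul_assoc]

lemma sum_count_nsmul_weight (r : ℕ → R) {n i : ℕ} (hi : 1 ≤ i) (hin : i ≤ n) :
    ∑ μ : n.Partition, μ.parts.count i • weight r μ.parts =
      r i * coeff (n - i) (genSeries r) := by
  let e := Nat.Partition.partitionWithPartEquiv hi hin
  rw [coeff_genSeries, mul_sum]
  refine (Fintype.sum_of_injective (fun ν => (e.symm ν).1)
    (Subtype.val_injective.comp e.symm.injective) _ _ (fun μ hμ => ?_) fun ν => ?_).symm
  · have hnotMem : i ∉ μ.parts := fun h => hμ ⟨e ⟨μ, h⟩, by simp⟩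
    simp [hnotMem]
  · simp [e, ← count_nsmul_weight_cons]

lemma sum_map_parts {M : Type*} [AddCommMonoid M] {n : ℕ} (μ : n.Partition) (f : ℕ → M) :
    (μ.parts.map f).sum = ∑ i ∈ range (n + 1), μ.parts.count i • f i := by
  rw [sum_multiset_map_count]
  refine sum_subset (fun i hi => ?_) fun i _ hi => ?_
  · exact mem_range_succ_iff.2 (μ.le_of_mem_parts (Multiset.mem_toFinset.1 hi))
  · rw [Multiset.count_eq_zero.2 (mt Multiset.mem_toFinset.2 hi), zero_smul]

lemma sum_sum_map_parts_mul_weight (r : ℕ → R) {f : ℕ → R} (hf : f 0 = 0) (n : ℕ) :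
    ∑ μ : n.Partition, (μ.parts.map f).sum * weight r μ.parts =
      coeff n (PowerSeries.mk (f * r) * genSeries r) := by
  simp only [sum_map_parts, sum_mul, smul_mul_assoc, ← mul_smul_comm]
  rw [sum_comm, coeff_mul, Nat.sum_antidiagonal_eq_sum_range_succ_mk]
  refine sum_congr rfl fun i hi => ?_
  obtain rfl | hpos := Nat.eq_zero_or_pos i
  · simp [hf]
  · rw [← mul_sum, sum_count_nsmul_weight r hpos (mem_range_succ_iff.1 hi), coeff_mk, Pi.mul_apply,
      mul_assoc]

lemma euler_genSeries (r : ℕ → R) :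
    euler R (genSeries r) = PowerSeries.mk (Nat.cast * r) * genSeries r := by
  ext n
  rw [← sum_sum_map_parts_mul_weight r Nat.cast_zero, coeff_euler, coeff_genSeries, smul_sum]
  refine sum_congr rfl fun μ _ => ?_
  rw [← Nat.cast_multiset_sum, μ.parts_sum, nsmul_eq_mul]

lemma genSeries_nsmul (k : ℕ) (r : ℕ → R) : genSeries (k • r) = genSeries r ^ k := by
  have : IsAddTorsionFree R := .of_module_rat R
  have hG : PowerSeries.mk (Nat.cast * k • r) = k • PowerSeries.mk (Nat.cast * r) := by
    ext n
    simp only [map_nsmul, coeff_mk, Pi.mul_apply, Pi.smul_apply, mul_smul_comm]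
  refine eq_of_euler_eq_mul (G := k • PowerSeries.mk (Nat.cast * r)) ?_ ?_ ?_ ?_
  · rw [← coeff_zero_eq_constantCoeff_apply, map_nsmul, coeff_mk, Pi.mul_apply, Nat.cast_zero,
      zero_mul, smul_zero]
  · simp [constantCoeff_genSeries]
  · rw [euler_genSeries, hG]
  · exact derivation_pow_of_eq_mul (euler_genSeries r) k

lemma sum_sum_sq_parts_nsmul_weight_nsmul (k : ℕ) (r : ℕ → R) (n : ℕ) :
    ∑ μ : n.Partition, (μ.parts.map (· ^ 2)).sum • weight (k • r) μ.parts =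
      coeff n (k • euler R (PowerSeries.mk (Nat.cast * r)) * genSeries r ^ k) := by
  have hθG : PowerSeries.mk ((fun i : ℕ => (i : R) ^ 2) * k • r) =
      k • euler R (PowerSeries.mk (Nat.cast * r)) := by
    ext n
    simp only [map_nsmul, coeff_euler, coeff_mk, Pi.mul_apply, Pi.smul_apply, mul_smul_comm]
    rw [nsmul_eq_mul n, sq, mul_assoc]
  rw [← genSeries_nsmul, ← hθG, ← sum_sum_map_parts_mul_weight _ (by simp)]
  refine sum_congr rfl fun μ _ => ?_
  rw [nsmul_eq_mul, Nat.cast_multiset_sum, Multiset.map_map]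
  simp only [Function.comp_def, Nat.cast_pow]

lemma sq_nsmul_coeff_euler_euler_genSeries_mul_pow (q : ℕ → R) (k n : ℕ) :
    (k + 1) ^ 2 • coeff n (euler R (euler R (genSeries q)) * genSeries q ^ k) =
      ∑ μ : n.Partition,
        (n ^ 2 + k * (μ.parts.map (· ^ 2)).sum) • weight ((k + 1) • q) μ.parts := by
  rw [← map_nsmul, sq_nsmul_derivation_derivation_mul_pow (euler_genSeries q), map_add, map_nsmul,
    coeff_euler, coeff_euler, ← sum_sum_sq_parts_nsmul_weight_nsmul, ← genSeries_nsmul,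
    coeff_genSeries]
  simp only [smul_sum, ← sum_add_distrib, add_smul, mul_smul, sq]

end PartitionWeight

end QuadraticConvolution

open QuadraticConvolution in
theorem quadratic_convolution_Q_expansion_general {R : Type*} [CommRing R] [Algebra ℚ R]
    (a b c : R) (q : ℕ → R) (k n : ℕ) :
    ∑ v ∈ Finset.Nat.antidiagonalTuple (k + 1) n,
        (a + v 0 • b + v 0 ^ 2 • c) * ∏ i, (genSeries q).coeff (v i) =
      ∑ μ : n.Partition, (((k + 1 : ℕ) : ℚ) ^ μ.parts.card) •
        ((a + ((n : ℚ) / (k + 1 : ℕ)) • b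
            + (((n : ℚ) ^ 2 + k * ((μ.parts.map (· ^ 2)).sum : ℕ)) / (k + 1 : ℕ) ^ 2) • c) *
          weight q μ.parts) := by
  have hk : ((k + 1 : ℕ) : ℚ) ≠ 0 := by positivity
  have hweight (μ : n.Partition) :
      ((k + 1 : ℕ) : ℚ) ^ μ.parts.card • weight q μ.parts = weight ((k + 1) • q) μ.parts := by
    rw [weight_nsmul, ← Nat.cast_pow, Nat.cast_smul_eq_nsmul]
  have hlinear : (euler R (genSeries q) * genSeries q ^ k).coeff n =
      ∑ μ : n.Partition, ((n : ℚ) / (k + 1 : ℕ)) • weight ((k + 1) • q) μ.parts := by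
    rw [← smul_sum, ← coeff_genSeries, genSeries_nsmul, div_eq_inv_mul, mul_smul,
      eq_inv_smul_iff₀ hk, Nat.cast_smul_eq_nsmul, Nat.cast_smul_eq_nsmul,
      succ_nsmul_coeff_euler_mul_pow]
  have hquadratic : (euler R (euler R (genSeries q)) * genSeries q ^ k).coeff n =
      ∑ μ : n.Partition, (((n : ℚ) ^ 2 + k * ((μ.parts.map (· ^ 2)).sum : ℕ)) / (k + 1 : ℕ) ^ 2) •
        weight ((k + 1) • q) μ.parts := by
    simp only [div_eq_inv_mul, mul_smul, ← smul_sum]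
    rw [eq_inv_smul_iff₀ (pow_ne_zero 2 hk)]
    norm_cast
    exact sq_nsmul_coeff_euler_euler_genSeries_mul_pow q k n
  rw [sum_antidiagonalTuple_quadratic_mul_prod, ← genSeries_nsmul, coeff_genSeries, hlinear,
    hquadratic]
  simp only [mul_sum, ← sum_add_distrib, ← hweight]
  refine sum_congr rfl fun μ _ => ?_
  simp only [add_mul, smul_add, smul_mul_assoc, mul_smul_comm, smul_comm (_ ^ μ.parts.card)]

/-- **Quadratic weighted convolution identity (Q-expansion form).** If
`C₀ = 1` and `C_m = ∑_{μ ⊢ m} ∏ᵢ qᵢ^{mᵢ(μ)}/mᵢ(μ)!` for `m ≥ 1`, then for `n ≥ 1`: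
`∑_{i+j+k=n} (a + bi + ci²) Cᵢ Cⱼ C_k
  = ∑_{μ ⊢ n} 3^{ℓ(μ)} (a + (b/3)n + (c/9)(n² + 2p₂(μ))) ∏ᵢ qᵢ^{mᵢ(μ)}/mᵢ(μ)!`. -/
theorem quadratic_convolution_Q_expansion (R : Type*) [CommRing R] [Algebra ℚ R]
    (a b c : R) (q : ℕ → R) (C : ℕ → R) (hC0 : C 0 = 1)
    (hC : ∀ m : ℕ, 1 ≤ m → C m = ∑ μ : m.Partition,
      ∏ i ∈ μ.parts.toFinset,
        (((μ.parts.count i).factorial : ℚ))⁻¹ • q i ^ (μ.parts.count i))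
    (n : ℕ) (hn : 1 ≤ n) :
    ∑ v ∈ Finset.Nat.antidiagonalTuple 3 n,
        (a + (v 0) • b + ((v 0) ^ 2) • c) * (C (v 0) * C (v 1) * C (v 2)) =
    ∑ μ : n.Partition,
      ((3 : ℚ) ^ μ.parts.card) •
        ((a + ((n : ℚ) / 3) • b
            + (((n : ℚ) ^ 2 + 2 * ((μ.parts.map (· ^ 2)).sum : ℕ)) / 9) • c) *
          ∏ i ∈ μ.parts.toFinset,
            (((μ.parts.count i).factorial : ℚ))⁻¹ • q i ^ (μ.parts.count i)) := by
  have hCq (m : ℕ) : C m = (QuadraticConvolution.genSeries q).coeff m := by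
    obtain rfl | hm := m.eq_zero_or_pos
    · simp [hC0, QuadraticConvolution.constantCoeff_genSeries]
    · rw [hC m hm, QuadraticConvolution.coeff_genSeries]; rfl
  convert quadratic_convolution_Q_expansion_general a b c q 2 n using 2 with v _ μ
  · rw [hCq, hCq, hCq, Fin.prod_univ_three]
  · norm_num [QuadraticConvolution.weight, Finsupp.prod]
end

section
/- Let μ be a partition of an integer n ≥ 1 with multiplicities m_i(μ) and length ℓ(μ), and let P(z) = Π_{i≥1} (z^i + 2)^{m_i(μ)} ∈ ℚ[z]. Then the second derivative of P at z = 1 satisfies 9 · P''(1) = 3^{ℓ(μ)} · (n² − 3n + 2·p_2(μ)), i.e. P''(1) = 3^{ℓ(μ)−2}(n² − 3n + 2 p_2(μ)). -/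
open Polynomial

/-!
For `P = ∏ f`, logarithmic differentiation gives `P' / P = ∑ f' / f` and
`P'' / P = (∑ f' / f) ^ 2 + ∑ (f'' / f - (f' / f) ^ 2)`. At a point where all the factors take the
same value `b`, multiplying by `b` and by `b ^ 2` clears the denominators, so that these identities
hold over any commutative ring. The factors `X ^ i + c` all take the value `1 + c` at `1`, with
first two derivatives `i` and `i * (i - 1)` there.
-/

section

variable {R : Type*}

lemma eval_multiset_prod_of_eval_eq [CommSemiring R] {x b : R} {s : Multiset R[X]}
    (hs : ∀ p ∈ s, p.eval x = b) : s.prod.eval x = b ^ s.card := by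
  rw [eval_multiset_prod, Multiset.map_congr rfl hs, Multiset.map_const', Multiset.prod_replicate]

lemma mul_eval_derivative_multiset_prod_of_eval_eq [CommSemiring R] {x b : R} {s : Multiset R[X]}
    (hs : ∀ p ∈ s, p.eval x = b) :
    b * (derivative s.prod).eval x =
      b ^ s.card * (s.map fun p => (derivative p).eval x).sum := by
  induction s using Multiset.induction_on with
  | empty => simp
  | cons p s ih =>
    obtain ⟨hp, hs⟩ := Multiset.forall_mem_cons.mp hs
    simp only [Multiset.prod_cons, Multiset.map_cons, Multiset.sum_cons, Multiset.card_cons,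
      derivative_mul, eval_add, eval_mul, hp, eval_multiset_prod_of_eval_eq hs, mul_add, ih hs]
    ring

lemma sq_mul_eval_derivative_derivative_multiset_prod_of_eval_eq [CommRing R] {x b : R}
    {s : Multiset R[X]} (hs : ∀ p ∈ s, p.eval x = b) :
    b ^ 2 * (derivative (derivative s.prod)).eval x =
      b ^ s.card * ((s.map fun p => (derivative p).eval x).sum ^ 2 +
        (s.map fun p => b * (derivative (derivative p)).eval x -
          (derivative p).eval x ^ 2).sum) := by
  induction s using Multiset.induction_on with
  | empty => simp
  | cons p s ih =>
    obtain ⟨hp, hs⟩ := Multiset.forall_mem_cons.mp hs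
    have leibniz : (derivative (derivative (p * s.prod))).eval x =
        (derivative (derivative p)).eval x * b ^ s.card +
          2 * (derivative p).eval x * (derivative s.prod).eval x +
          b * (derivative (derivative s.prod)).eval x := by
      simp only [derivative_mul, derivative_add, eval_add, eval_mul, hp,
        eval_multiset_prod_of_eval_eq hs]
      ring
    simp only [Multiset.prod_cons, Multiset.map_cons, Multiset.sum_cons, Multiset.card_cons,
      leibniz]
    linear_combination b * ih hs + 2 * b * (derivative p).eval x *
      mul_eval_derivative_multiset_prod_of_eval_eq hs

lemma eval_one_derivative_X_pow_add_C [Semiring R] (c : R) (i : ℕ) :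
    (derivative (X ^ i + C c)).eval 1 = (i : R) := by
  simp [derivative_X_pow]

lemma eval_one_derivative_derivative_X_pow_add_C [Ring R] (c : R) (i : ℕ) :
    (derivative (derivative (X ^ i + C c))).eval 1 = (i : R) * (i - 1) := by
  cases i <;> simp [derivative_X_pow, add_mul]

theorem second_deriv_prod_pow_add_two_general [CommRing R] (c : R) (s : Multiset ℕ) :
    (1 + c) ^ 2 * (derivative (derivative (s.map fun i => X ^ i + C c).prod)).eval 1 =
      (1 + c) ^ s.card *
        ((s.sum : R) ^ 2 - (1 + c) * (s.sum : R) + c * ((s.map (· ^ 2)).sum : ℕ)) := by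
  have factor_eval : ∀ p ∈ s.map fun i => X ^ i + C c, p.eval 1 = 1 + c := by simp
  have sum_correction : (s.map fun i : ℕ => (1 + c) * ((i : R) * (i - 1)) - (i : R) ^ 2).sum =
      c * ((s.map (· ^ 2)).sum : ℕ) - (1 + c) * (s.sum : R) := by
    have summand (i : ℕ) : (1 + c) * ((i : R) * (i - 1)) - (i : R) ^ 2 =
        c * ((i ^ 2 : ℕ) : R) - (1 + c) * i := by
      push_cast
      ring
    simp only [summand, Multiset.sum_map_sub, Multiset.sum_map_mul_left, Nat.cast_multiset_sum,
      Multiset.map_map, Function.comp_def]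
  rw [sq_mul_eval_derivative_derivative_multiset_prod_of_eval_eq factor_eval]
  simp only [Multiset.map_map, Function.comp_def, Multiset.card_map,
    eval_one_derivative_X_pow_add_C, eval_one_derivative_derivative_X_pow_add_C, sum_correction,
    ← Nat.cast_multiset_sum]
  ring

end

/-- **Key derivative computation in Lemma 1.** For a partition `μ` of `n ≥ 1`, with
`P(z) = ∏_{i≥1} (zⁱ + 2)^{mᵢ(μ)}`, one has `9 P''(1) = 3^{ℓ(μ)} (n² − 3n + 2p₂(μ))`. -/
theorem second_deriv_prod_pow_add_two (n : ℕ) (hn : 1 ≤ n) (μ : n.Partition) :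
    9 * (Polynomial.derivative (Polynomial.derivative
        (∏ i ∈ μ.parts.toFinset,
          ((Polynomial.X : Polynomial ℚ) ^ i + 2) ^ (μ.parts.count i)))).eval 1 =
      3 ^ μ.parts.card *
        ((n : ℚ) ^ 2 - 3 * (n : ℚ) + 2 * ((μ.parts.map (· ^ 2)).sum : ℕ)) := by
  have one_add_two : (1 : ℚ) + 2 = 3 := by norm_num
  have three_sq : (3 : ℚ) ^ 2 = 9 := by norm_num
  simpa only [μ.parts_sum, Finset.prod_multiset_map_count, map_ofNat C, one_add_two, three_sq]
    using second_deriv_prod_pow_add_two_general (2 : ℚ) μ.parts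
end

section
/- Define F_2(ν) = (1/2880)(4·p_2(ν)·p_1(ν)² − p_1(ν)⁴ + 24·p_2(ν)·p_1(ν) − 4·p_1(ν)³ + 30·p_2(ν) + 5·p_1(ν)² + 18·p_1(ν)) for ν ∈ ℕ³, and f_2(μ) = (1/5760)(2·p_2(μ)·p_1(μ)² + p_1(μ)⁴ + 12·p_2(μ)·p_1(μ) + 8·p_1(μ)³ + 15·p_2(μ) + 20·p_1(μ)² + 18·p_1(μ)) for a partition μ. Then for every integer n ≥ 1 and every finite number of variables, the following identity of symmetric polynomials over ℚ holds: Σ_{ν∈ℕ³, ν_1+ν_2+ν_3=n} F_2(ν) · e_{ν_1}·e_{ν_2}·e_{ν_3} = Σ_{μ ⊢ n} (−1)^{n−ℓ(μ)} · f_2(μ) · ((ℓ(μ)+2)! / Π_i m_i(μ)!) · h_μ. -/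
/-!
Let `A = ∑ i ≥ 1, (-1) ^ (i - 1) hᵢ tⁱ` and `E = ∑ eᵢ tⁱ`; the relation `E(t) H(-t) = 1` says
`E = (1 - A)⁻¹`. With `d = 2`, both sides are instances of two sums over tuples and two over
partitions, with and without the factor `p₂`:
* over the `(d + 1)`-tuples of sum `n`, `∑ ∏ e_{νᵢ} = [tⁿ] E ^ (d + 1)`;
* the quotient `(ℓ + d)! / ∏ mᵢ!` is `d!` times `(d + ℓ).choose d` times the number of
  rearrangements of `μ`, so the partition sum is the coefficient of `tⁿ` in `A` substituted into
  `∑ (d + l).choose d Xˡ = (1 - X)⁻¹ ^ (d + 1)`, which is again `[tⁿ] E ^ (d + 1)`;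
* perturbing `aᵢ` to `aᵢ (1 + i² ε)` over the dual numbers and comparing `ε`-components inserts the
  factor `p₂`: with `θ = t d/dt`, this gives `[tⁿ] (d + 1) E ^ d θ²E` for tuples and
  `[tⁿ] (d + 1) E ^ (d + 2) θ²A` for partitions.

Because `E = (1 - A)⁻¹` and `θ` is a derivation,
`d (d + 1) E ^ (d + 2) θ²A = (d + 2) (d + 1) E ^ d θ²E - 2 θ²(E ^ (d + 1))`, and the last term
contributes `-2 n² [tⁿ] E ^ (d + 1)`. So for a weight `f` affine in `p₂`, a partition sum weighted
by `f(p₂)` is a tuple sum weighted by `f(((d + 2) p₂ - 2 n²) / d)`. On both sides `p₁ = n`, so `f₂`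
is affine in `p₂`, and `d! f₂` transforms into `F₂`: `F₂(n, p₂) = 2 f₂(n, 2 p₂ - n²)`.
-/

open MvPolynomial Finset

/-- The weight function `F₂`, as a function of the first two power sums of its argument. -/
def F2val (p1 p2 : ℚ) : ℚ :=
  (1 / 2880) * (4 * p2 * p1 ^ 2 - p1 ^ 4 + 24 * p2 * p1 - 4 * p1 ^ 3
    + 30 * p2 + 5 * p1 ^ 2 + 18 * p1)

/-- The weight function `f₂`, as a function of the first two power sums of its argument. -/
def f2val (p1 p2 : ℚ) : ℚ :=
  (1 / 5760) * (2 * p2 * p1 ^ 2 + p1 ^ 4 + 12 * p2 * p1 + 8 * p1 ^ 3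
    + 15 * p2 + 20 * p1 ^ 2 + 18 * p1)

namespace KerovExpansion

open PowerSeries (rescale)
open scoped PowerSeries

section EulerOperator

variable {R : Type*} [CommSemiring R]

/-- The Euler operator `θ = X · d/dX` on power series, used to produce the weights `i ^ 2`. It is
bundled as a derivation so that Mathlib's Leibniz rules apply to it. -/
noncomputable def eulerOperator (R : Type*) [CommSemiring R] : Derivation R R⟦X⟧ R⟦X⟧ :=
  (PowerSeries.X : R⟦X⟧) • PowerSeries.derivative R

theorem coeff_eulerOperator (f : R⟦X⟧) (n : ℕ) :
    (eulerOperator R f).coeff n = n * f.coeff n := by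
  cases n with
  | zero => simp [eulerOperator]
  | succ n =>
    simp [eulerOperator, PowerSeries.coeff_succ_X_mul, PowerSeries.coeff_derivative, mul_comm]

theorem coeff_eulerOperator_eulerOperator (f : R⟦X⟧) (n : ℕ) :
    (eulerOperator R (eulerOperator R f)).coeff n = n ^ 2 * f.coeff n := by
  rw [coeff_eulerOperator, coeff_eulerOperator, sq, mul_assoc]

theorem mk_sq_mul_coeff (f : R⟦X⟧) :
    (PowerSeries.mk fun n => (n : R) ^ 2 * f.coeff n) = eulerOperator R (eulerOperator R f) := by
  ext n
  rw [PowerSeries.coeff_mk, coeff_eulerOperator_eulerOperator]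

end EulerOperator

section Derivation

variable {R S : Type*} [CommRing R] [CommRing S] [Algebra R S] (D : Derivation R S S) {a u : S}

theorem derivation_pow_of_mul_one_sub_eq_one (hu : u * (1 - a) = 1) (k : ℕ) :
    D (u ^ k) = k * u ^ (k + 1) * D a := by
  have hD : D u = u ^ 2 * D a := by simp [D.leibniz_of_mul_eq_one hu]
  cases k with
  | zero => simp
  | succ k =>
    rw [D.leibniz_pow, hD, Nat.add_sub_cancel, nsmul_eq_mul, smul_eq_mul]
    ring

theorem derivation_derivation_pow_of_mul_one_sub_eq_one (hu : u * (1 - a) = 1) (k : ℕ) :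
    D (D (u ^ k)) = k * (k + 1) * u ^ (k + 2) * D a ^ 2 + k * u ^ (k + 1) * D (D a) := by
  have hk : D ((k : S) * u ^ (k + 1)) = k * D (u ^ (k + 1)) := by
    rw [D.leibniz, D.map_natCast, smul_zero, add_zero, smul_eq_mul]
  rw [derivation_pow_of_mul_one_sub_eq_one D hu, D.leibniz, hk,
    derivation_pow_of_mul_one_sub_eq_one D hu]
  push_cast
  simp only [smul_eq_mul]
  ring

theorem nsmul_derivation_derivation_add_of_mul_one_sub_eq_one (hu : u * (1 - a) = 1) (d : ℕ) :
    d • ((d + 1) • (u ^ (d + 2) * D (D a))) + 2 • D (D (u ^ (d + 1))) =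
      (d + 2) • ((d + 1) • (u ^ d * D (D u))) := by
  have h := derivation_derivation_pow_of_mul_one_sub_eq_one D hu
  have h₁ := h 1
  rw [pow_one] at h₁
  rw [h, h₁]
  simp only [nsmul_eq_mul]
  push_cast
  ring

end Derivation

section DualNumber

variable {R : Type*} [CommSemiring R]

open TrivSqZeroExt

/-- The canonical ring homomorphism `R⟦X⟧[ε] → R[ε]⟦X⟧`. It turns identities between coefficients
that are valid over every ring into their first-order variations. -/
noncomputable def dualNumberToPowerSeries : DualNumber R⟦X⟧ →+* (DualNumber R)⟦X⟧ where
  toFun x := PowerSeries.mk fun n => inl (x.fst.coeff n) + inr (x.snd.coeff n)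
  map_zero' := by ext <;> simp
  map_one' := by
    ext n <;> by_cases h : n = 0 <;> simp [PowerSeries.coeff_one, h]
  map_add' x y := by ext <;> simp
  map_mul' x y := by
    ext n
    · simp [PowerSeries.coeff_mul, fst_sum]
    · simp [PowerSeries.coeff_mul, snd_sum, sum_add_distrib]

theorem coeff_dualNumberToPowerSeries (x : DualNumber R⟦X⟧) (n : ℕ) :
    (dualNumberToPowerSeries x).coeff n = inl (x.fst.coeff n) + inr (x.snd.coeff n) := by
  simp [dualNumberToPowerSeries]

theorem coeff_dualNumberToPowerSeries_inl_add_inr_mk (w : ℕ → R) (f : R⟦X⟧) (n : ℕ) :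
    (dualNumberToPowerSeries (inl f + inr (PowerSeries.mk fun i => w i * f.coeff i))).coeff n =
      inl (f.coeff n) + inr (w n * f.coeff n) := by
  simp [coeff_dualNumberToPowerSeries]

theorem prod_map_inl_add_inr {ι : Type*} (a w : ι → R) (m : Multiset ι) :
    (m.map fun i => (inl (a i) + inr (w i * a i) : DualNumber R)).prod =
      inl (m.map a).prod + inr ((m.map w).sum * (m.map a).prod) := by
  induction m using Multiset.induction_on with
  | empty => simp
  | cons i m ih =>
    simp only [Multiset.map_cons, Multiset.prod_cons, Multiset.sum_cons, ih]
    ext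
    · simp
    · simp only [snd_mul, fst_add, snd_add, fst_inl, snd_inl, fst_inr, snd_inr, add_zero, zero_add,
        smul_eq_mul, op_smul_eq_mul]
      ring

theorem snd_coeff_dualNumberToPowerSeries_pow (f g : R⟦X⟧) (d n : ℕ) :
    ((dualNumberToPowerSeries (inl f + inr g) ^ (d + 1)).coeff n).snd =
      (d + 1) * (f ^ d * g).coeff n := by
  have hsnd : ((inl f + inr g : DualNumber R⟦X⟧) ^ (d + 1)).snd = (d + 1) • (f ^ d * g) := by
    simp [snd_pow]
  rw [← map_pow, coeff_dualNumberToPowerSeries, hsnd, map_nsmul]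
  simp

end DualNumber

section Tuples

variable {R : Type*} [CommSemiring R]

theorem coeff_pow_eq_sum_antidiagonalTuple (f : R⟦X⟧) (k n : ℕ) :
    (f ^ k).coeff n = ∑ v ∈ Nat.antidiagonalTuple k n, ∏ i, f.coeff (v i) := by
  rw [← Fin.prod_const, PowerSeries.coeff_prod]
  refine sum_equiv Finsupp.equivFunOnFinite (fun v => ?_) fun v _ => rfl
  simp [Nat.mem_antidiagonalTuple]

open TrivSqZeroExt in
theorem sum_antidiagonalTuple_sum_mul_prod_coeff (w : ℕ → R) (f : R⟦X⟧) (d n : ℕ) :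
    ∑ v ∈ Nat.antidiagonalTuple (d + 1) n, (∑ i, w (v i)) * ∏ i, f.coeff (v i) =
      (d + 1) * (f ^ d * PowerSeries.mk fun i => w i * f.coeff i).coeff n := by
  have hprod (v : Fin (d + 1) → ℕ) :
      ∏ i, (inl (f.coeff (v i)) + inr (w (v i) * f.coeff (v i)) : DualNumber R) =
        inl (∏ i, f.coeff (v i)) + inr ((∑ i, w (v i)) * ∏ i, f.coeff (v i)) :=
    prod_map_inl_add_inr (fun i => f.coeff (v i)) (fun i => w (v i)) univ.val
  have h := congrArg snd (coeff_pow_eq_sum_antidiagonalTuple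
    (dualNumberToPowerSeries (inl f + inr (PowerSeries.mk fun i => w i * f.coeff i))) (d + 1) n)
  simp_rw [coeff_dualNumberToPowerSeries_inl_add_inr_mk, hprod] at h
  rw [snd_coeff_dualNumberToPowerSeries_pow] at h
  simpa [snd_sum] using h.symm

end Tuples

section Partitions

variable {R : Type*}

section CommSemiring

variable [CommSemiring R]

theorem prod_map_monomial (a : ℕ → R) (m : Multiset ℕ) :
    (m.map fun i => PowerSeries.monomial i (a i)).prod =
      PowerSeries.monomial m.sum (m.map a).prod := by
  induction m using Multiset.induction_on with
  | empty => simp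
  | cons i m ih => simp [ih, PowerSeries.monomial_mul_monomial]

theorem coe_trunc_succ_eq_sum_monomial {A : R⟦X⟧} (hA : A.constantCoeff = 0) (n : ℕ) :
    (A.trunc (n + 1) : R⟦X⟧) = ∑ i ∈ Icc 1 n, PowerSeries.monomial i (A.coeff i) := by
  ext m
  rcases m.eq_zero_or_pos with rfl | hm
  · simp [PowerSeries.coeff_trunc, PowerSeries.coeff_monomial, hA]
  · simp [PowerSeries.coeff_trunc, PowerSeries.coeff_monomial, hm.ne', Nat.one_le_iff_ne_zero]

theorem coeff_pow_eq_sum_partition {A : R⟦X⟧} (hA : A.constantCoeff = 0) (l n : ℕ) :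
    (A ^ l).coeff n = ∑ μ : n.Partition with μ.parts.card = l,
      μ.parts.countPerms * (μ.parts.map fun i => A.coeff i).prod := by
  have htrunc : (A ^ l).coeff n = ((A.trunc (n + 1) : R⟦X⟧) ^ l).coeff n := by
    rw [← PowerSeries.coeff_coe_trunc_of_lt n.lt_succ_self, ← PowerSeries.trunc_trunc_pow,
      PowerSeries.coeff_coe_trunc_of_lt n.lt_succ_self]
  have hcoeff (k : Sym ℕ l) : ((k.1.countPerms : R⟦X⟧) *
      (k.1.map fun i => PowerSeries.monomial i (A.coeff i)).prod).coeff n =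
        if k.1.sum = n then k.1.countPerms * (k.1.map fun i => A.coeff i).prod else 0 := by
    rw [prod_map_monomial, ← nsmul_eq_mul, map_nsmul, PowerSeries.coeff_monomial, nsmul_eq_mul]
    simp only [mul_ite, mul_zero, eq_comm]
  rw [htrunc, coe_trunc_succ_eq_sum_monomial hA, sum_pow, map_sum,
    sum_congr rfl fun k _ => hcoeff k, ← sum_filter]
  symm
  refine sum_bij (fun μ hμ => ⟨μ.parts, (mem_filter.1 hμ).2⟩) ?_ ?_ ?_ fun _ _ => rfl
  · intro μ hμ
    refine mem_filter.2 ⟨mem_sym_iff.2 fun i hi => ?_, μ.parts_sum⟩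
    exact mem_Icc.2 ⟨μ.parts_pos hi, μ.le_of_mem_parts hi⟩
  · intro μ _ ν _ h
    exact Nat.Partition.ext (congrArg Subtype.val h)
  · intro k hk
    rw [mem_filter, mem_sym_iff] at hk
    exact ⟨⟨k.1, fun hi => (mem_Icc.1 (hk.1 _ hi)).1, hk.2⟩, by simp [mem_filter], rfl⟩

end CommSemiring

variable [CommRing R] {A U : R⟦X⟧}

theorem coeff_subst_eq_sum_partition (f : R⟦X⟧) (hA : A.constantCoeff = 0) (n : ℕ) :
    PowerSeries.coeff n (f.subst A) = ∑ μ : n.Partition, PowerSeries.coeff μ.parts.card f *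
      (μ.parts.countPerms * (μ.parts.map fun i => A.coeff i).prod) := by
  have hmaps : ∀ μ ∈ (univ : Finset n.Partition),
      μ.parts.card ∈ univ.image fun μ : n.Partition => μ.parts.card :=
    fun μ hμ => mem_image_of_mem _ hμ
  have hterm (l : ℕ) : f.coeff l • (A ^ l).coeff n =
      ∑ μ : n.Partition with μ.parts.card = l, f.coeff μ.parts.card *
        (μ.parts.countPerms * (μ.parts.map fun i => A.coeff i).prod) := by
    rw [coeff_pow_eq_sum_partition hA, smul_eq_mul, mul_sum]
    exact sum_congr rfl fun μ hμ => by rw [(mem_filter.1 hμ).2]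
  rw [PowerSeries.coeff_subst' (.of_constantCoeff_zero' hA), finsum_congr hterm,
    ← sum_fiberwise_of_maps_to hmaps]
  refine finsum_eq_sum_of_support_subset _ fun l hl => ?_
  obtain ⟨μ, hμ, -⟩ := exists_ne_zero_of_sum_ne_zero hl
  exact mem_coe.2 (mem_image.2 ⟨μ, mem_univ _, (mem_filter.1 hμ).2⟩)

theorem subst_mk_choose_of_mul_one_sub_eq_one (hA : A.constantCoeff = 0)
    (hU : U * (1 - A) = 1) (d : ℕ) :
    (PowerSeries.mk fun l => ((d + l).choose d : R)).subst A = U ^ (d + 1) := by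
  have hsubst := PowerSeries.HasSubst.of_constantCoeff_zero' hA
  have h := congrArg (PowerSeries.substAlgHom (R := R) hsubst)
    (PowerSeries.mk_add_choose_mul_one_sub_pow_eq_one R d)
  simp only [map_mul, map_pow, map_sub, map_one, PowerSeries.coe_substAlgHom,
    PowerSeries.subst_X hsubst] at h
  refine left_inv_eq_right_inv h ?_
  rw [mul_comm, ← mul_pow, hU, one_pow]

theorem sum_partition_choose_mul_prod_coeff (hA : A.constantCoeff = 0)
    (hU : U * (1 - A) = 1) (d n : ℕ) :
    ∑ μ : n.Partition, ((d + μ.parts.card).choose d : R) *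
      (μ.parts.countPerms * (μ.parts.map fun i => A.coeff i).prod) = (U ^ (d + 1)).coeff n := by
  rw [← subst_mk_choose_of_mul_one_sub_eq_one hA hU, coeff_subst_eq_sum_partition _ hA]
  simp only [PowerSeries.coeff_mk]

open TrivSqZeroExt in
theorem sum_partition_choose_mul_sum_mul_prod_coeff (w : ℕ → R)
    (hA : A.constantCoeff = 0) (hU : U * (1 - A) = 1) (d n : ℕ) :
    ∑ μ : n.Partition, ((d + μ.parts.card).choose d : R) * (μ.parts.countPerms *
      ((μ.parts.map w).sum * (μ.parts.map fun i => A.coeff i).prod)) =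
        (d + 1) * (U ^ (d + 2) * PowerSeries.mk fun i => w i * A.coeff i).coeff n := by
  -- Perturb `A` to `A + εB`; since `ε² = 0`, the inverse of `1 - A - εB` is `U + εU²B`.
  set B := PowerSeries.mk fun i => w i * A.coeff i with hB
  have hU' : (inl U + inr (U ^ 2 * B)) * (1 - (inl A + inr B)) = (1 : DualNumber R⟦X⟧) := by
    ext1
    · simpa using hU
    · simp only [snd_mul, fst_sub, snd_sub, fst_one, snd_one, fst_add, snd_add, fst_inl, snd_inl,
        fst_inr, snd_inr, add_zero, zero_add, zero_sub, smul_eq_mul, op_smul_eq_mul]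
      linear_combination (U * B) * hU
  have hA' : (dualNumberToPowerSeries (inl A + inr B)).constantCoeff = 0 := by
    rw [← PowerSeries.coeff_zero_eq_constantCoeff_apply,
      coeff_dualNumberToPowerSeries_inl_add_inr_mk]
    simp [hA]
  have h := congrArg snd (sum_partition_choose_mul_prod_coeff hA'
    (by rw [← map_one dualNumberToPowerSeries, ← map_sub, ← map_mul, hU', map_one]) d n)
  simp_rw [hB, coeff_dualNumberToPowerSeries_inl_add_inr_mk, prod_map_inl_add_inr] at h
  rw [snd_coeff_dualNumberToPowerSeries_pow, snd_sum, ← mul_assoc, ← pow_add] at h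
  simpa using h

end Partitions

section Comparison

variable {R : Type*} [CommRing R] {A U : R⟦X⟧}

theorem sum_partition_choose_mul_sum_sq_mul_prod_coeff (hA : A.constantCoeff = 0)
    (hU : U * (1 - A) = 1) (d n : ℕ) :
    d * ∑ μ : n.Partition, ((d + μ.parts.card).choose d : R) * (μ.parts.countPerms *
      (((μ.parts.map (· ^ 2)).sum : ℕ) * (μ.parts.map fun i => A.coeff i).prod)) =
    (d + 2) * ∑ v ∈ Nat.antidiagonalTuple (d + 1) n, (∑ i, (v i : R) ^ 2) * ∏ i, U.coeff (v i) -
      2 * (n ^ 2 * ∑ v ∈ Nat.antidiagonalTuple (d + 1) n, ∏ i, U.coeff (v i)) := by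
  have hcast (μ : n.Partition) : (((μ.parts.map (· ^ 2)).sum : ℕ) : R) =
      (μ.parts.map fun i : ℕ => (i : R) ^ 2).sum := by
    simp
  simp_rw [hcast]
  rw [sum_partition_choose_mul_sum_mul_prod_coeff _ hA hU,
    sum_antidiagonalTuple_sum_mul_prod_coeff fun i => (i : R) ^ 2,
    ← coeff_pow_eq_sum_antidiagonalTuple, mk_sq_mul_coeff, mk_sq_mul_coeff,
    ← coeff_eulerOperator_eulerOperator, eq_sub_iff_add_eq]
  have h := congrArg (PowerSeries.coeff n)
    (nsmul_derivation_derivation_add_of_mul_one_sub_eq_one (eulerOperator R) hU d)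
  simp only [map_add, map_nsmul] at h
  simpa only [nsmul_eq_mul, Nat.cast_add, Nat.cast_one, Nat.cast_ofNat] using h

theorem sum_antidiagonalTuple_affine_eq_sum_partition (hA : A.constantCoeff = 0)
    (hU : U * (1 - A) = 1) (b c : R) (d n : ℕ) :
    ∑ v ∈ Nat.antidiagonalTuple (d + 1) n,
        (d * b + c * ((d + 2) * ∑ i, (v i : R) ^ 2 - 2 * n ^ 2)) * ∏ i, U.coeff (v i) =
      ∑ μ : n.Partition, d * (b + c * ((μ.parts.map (· ^ 2)).sum : ℕ)) *
        ((d + μ.parts.card).choose d * μ.parts.countPerms *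
          (μ.parts.map fun i => A.coeff i).prod) := by
  have h₁ := sum_partition_choose_mul_prod_coeff hA hU d n
  have h₂ := sum_partition_choose_mul_sum_sq_mul_prod_coeff hA hU d n
  rw [coeff_pow_eq_sum_antidiagonalTuple] at h₁
  have h := congrArg₂ (fun x y => d * b * x + c * y) h₁ h₂
  simp only [mul_sum, ← sum_add_distrib, ← sum_sub_distrib] at h
  convert h.symm using 2 <;> ring

end Comparison

section Weights

theorem f2val_eq_add_mul (x p : ℚ) : f2val x p = f2val x 0 + (f2val x 1 - f2val x 0) * p := by
  simp only [f2val]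
  ring

theorem F2val_eq_two_mul_f2val (x p : ℚ) : F2val x p = 2 * f2val x (2 * p - x ^ 2) := by
  simp only [F2val, f2val]
  ring

theorem factorial_card_add_div_prod_factorial_count {α : Type*} [DecidableEq α] (m : Multiset α)
    (d : ℕ) :
    ((m.card + d).factorial : ℚ) / ∏ i ∈ m.toFinset, ((m.count i).factorial : ℚ) =
      d.factorial * ((d + m.card).choose d * m.countPerms) := by
  have hperms : (∏ i ∈ m.toFinset, (m.count i).factorial) * m.countPerms = m.card.factorial := by
    rw [← Multiset.toFinset_sum_count_eq m, ← Nat.multinomial_spec]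
    simp [Multiset.countPerms, Finsupp.multinomial, Nat.multinomial, Finsupp.sum, Finsupp.prod]
  have hne : ∏ i ∈ m.toFinset, ((m.count i).factorial : ℚ) ≠ 0 :=
    prod_ne_zero_iff.2 fun i _ => Nat.cast_ne_zero.2 (Nat.factorial_ne_zero _)
  rw [div_eq_iff hne, add_comm, ← Nat.add_choose_mul_factorial_mul_factorial, ← hperms]
  push_cast
  rw [Nat.choose_symm_add]
  ring

theorem prod_map_pow_succ {M : Type*} [CommMonoid M] (x : M) (m : Multiset ℕ) :
    (m.map fun i => x ^ (i + 1)).prod = x ^ (m.sum + m.card) := by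
  induction m using Multiset.induction_on with
  | empty => simp
  | cons i m ih =>
    rw [Multiset.map_cons, Multiset.prod_cons, ih, Multiset.sum_cons, Multiset.card_cons,
      ← pow_add, add_add_add_comm, add_comm 1]

theorem card_parts_le {n : ℕ} (μ : n.Partition) : μ.parts.card ≤ n := by
  simpa [μ.parts_sum] using Multiset.card_nsmul_le_sum fun i hi => μ.parts_pos hi

theorem prod_map_coeff_one_sub_rescale {R : Type*} [CommRing R] (h : ℕ → R) {n : ℕ}
    (μ : n.Partition) :
    (μ.parts.map fun i => (1 - rescale (-1) (PowerSeries.mk h)).coeff i).prod =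
      (-1) ^ (n - μ.parts.card) * (μ.parts.map h).prod := by
  have hcoeff : ∀ i ∈ μ.parts,
      (1 - rescale (-1) (PowerSeries.mk h)).coeff i = (-1) ^ (i + 1) * h i := by
    intro i hi
    simp [PowerSeries.coeff_one, (μ.parts_pos hi).ne', pow_succ]
  have hsign : n + μ.parts.card = (n - μ.parts.card) + 2 * μ.parts.card := by
    have := card_parts_le μ
    lia
  rw [Multiset.map_congr rfl hcoeff, Multiset.prod_map_mul, prod_map_pow_succ,
    μ.parts_sum, hsign, pow_add, pow_mul, neg_one_sq, one_pow, mul_one]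

end Weights

section SymmetricPolynomials

variable (σ R : Type*) [Fintype σ]

theorem mk_esymm_eq_prod [CommSemiring R] :
    PowerSeries.mk (esymm σ R) = ∏ i : σ, (1 + PowerSeries.C (X i) * PowerSeries.X) := by
  classical
  ext1 n
  simp only [prod_one_add, prod_mul_distrib, prod_const, ← map_prod, map_sum,
    PowerSeries.coeff_C_mul_X_pow, PowerSeries.coeff_mk, esymm]
  rw [← sum_filter]
  exact sum_congr (by ext t; simp [mem_powersetCard, eq_comm]) fun _ _ => rfl

theorem mk_hsymm_eq_prod [CommSemiring R] [DecidableEq σ] :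
    PowerSeries.mk (hsymm σ R) =
      ∏ i : σ, rescale (X i : MvPolynomial σ R) (PowerSeries.mk 1) := by
  ext1 n
  simp only [PowerSeries.coeff_mk, hsymm, PowerSeries.coeff_prod, PowerSeries.coeff_rescale,
    Pi.one_apply, mul_one]
  refine sum_bij (fun s _ => Multiset.toFinsupp s.1) ?_ ?_ ?_ ?_
  · intro s _
    rw [mem_finsuppAntidiag]
    exact ⟨(Multiset.sum_count_eq_card fun i _ => mem_univ i).trans s.2, subset_univ _⟩
  · intro s _ t _ h
    exact Subtype.ext (Multiset.toFinsupp.injective h)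
  · intro l hl
    rw [mem_finsuppAntidiag] at hl
    refine ⟨⟨Finsupp.toMultiset l, ?_⟩, mem_univ _, by simp⟩
    rw [Finsupp.card_toMultiset, Finsupp.sum_fintype _ _ fun _ => rfl]
    exact hl.1
  · intro s _
    rw [prod_multiset_map_count]
    refine prod_subset (subset_univ _) fun i _ hi => ?_
    rw [Multiset.count_eq_zero_of_notMem (by simpa using hi), pow_zero]

theorem one_add_C_mul_X_mul_rescale_rescale {S : Type*} [CommRing S] (x : S) :
    (1 + PowerSeries.C x * PowerSeries.X) * rescale (-1) (rescale x (PowerSeries.mk 1)) = 1 := by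
  have h : 1 + PowerSeries.C x * PowerSeries.X = rescale (-x) (1 - PowerSeries.X) := by
    simp [PowerSeries.rescale_X]
  rw [h, PowerSeries.rescale_rescale, mul_neg_one, ← map_mul, mul_comm,
    PowerSeries.mk_one_mul_one_sub_eq_one, map_one]

theorem mk_esymm_mul_rescale_mk_hsymm [CommRing R] [DecidableEq σ] :
    PowerSeries.mk (esymm σ R) * rescale (-1) (PowerSeries.mk (hsymm σ R)) = 1 := by
  rw [mk_esymm_eq_prod, mk_hsymm_eq_prod, map_prod, ← prod_mul_distrib]
  exact prod_eq_one fun i _ => one_add_C_mul_X_mul_rescale_rescale (X i)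

end SymmetricPolynomials

end KerovExpansion

open KerovExpansion in
theorem F2_esymm_eq_f2_hsymm_general {R : Type*} [CommRing R] [Algebra ℚ R] {e h : ℕ → R}
    (h_zero : h 0 = 1)
    (h_mul : PowerSeries.mk e * PowerSeries.rescale (-1) (PowerSeries.mk h) = 1) (n : ℕ) :
    ∑ v ∈ Finset.Nat.antidiagonalTuple 3 n,
        F2val ((v 0 : ℚ) + (v 1) + (v 2)) ((v 0 : ℚ) ^ 2 + (v 1) ^ 2 + (v 2) ^ 2) •
          (e (v 0) * e (v 1) * e (v 2)) =
    ∑ μ : n.Partition,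
      ((-1 : ℚ) ^ (n - μ.parts.card) *
        f2val (μ.parts.sum : ℚ) (((μ.parts.map (· ^ 2)).sum : ℕ) : ℚ) *
        (((μ.parts.card + 2).factorial : ℚ) /
          ∏ i ∈ μ.parts.toFinset, ((μ.parts.count i).factorial : ℚ))) •
        (μ.parts.map h).prod := by
  have hA : (1 - PowerSeries.rescale (-1) (PowerSeries.mk h)).constantCoeff = 0 := by
    rw [← PowerSeries.coeff_zero_eq_constantCoeff_apply]
    simp [-PowerSeries.coeff_zero_eq_constantCoeff, h_zero]
  have hU : PowerSeries.mk e * (1 - (1 - PowerSeries.rescale (-1) (PowerSeries.mk h))) = 1 := by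
    rw [sub_sub_cancel, h_mul]
  convert sum_antidiagonalTuple_affine_eq_sum_partition hA hU (algebraMap ℚ R (f2val n 0))
    (algebraMap ℚ R (f2val n 1 - f2val n 0)) 2 n using 2 with v hv μ
  · rw [Nat.mem_antidiagonalTuple, Fin.sum_univ_three] at hv
    have hv' : (v 0 : ℚ) + v 1 + v 2 = n := by exact_mod_cast hv
    rw [hv', F2val_eq_two_mul_f2val, f2val_eq_add_mul, Algebra.smul_def]
    simp only [map_mul, map_ofNat, map_add, map_sub, map_pow, map_natCast, Nat.cast_ofNat,
      Nat.reduceAdd, Fin.sum_univ_three, Fin.prod_univ_three, PowerSeries.coeff_mk]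
    ring
  · rw [factorial_card_add_div_prod_factorial_count, μ.parts_sum, f2val_eq_add_mul,
      prod_map_coeff_one_sub_rescale, Algebra.smul_def]
    simp only [Nat.factorial_two, Nat.cast_ofNat, map_mul, map_pow, map_neg, map_one, map_add,
      map_sub, map_natCast, map_ofNat]
    ring

/-- **The `k = 2` case of the abstract C-to-R identity:** for `n ≥ 1`, in any finite number
of variables over `ℚ`, `∑_{ν∈ℕ³, |ν|=n} F₂(ν) e_{ν₁} e_{ν₂} e_{ν₃}
  = ∑_{μ ⊢ n} (−1)^{n−ℓ(μ)} f₂(μ) ((ℓ(μ)+2)!/∏ᵢ mᵢ(μ)!) h_μ`. -/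
theorem F2_esymm_eq_f2_hsymm (n : ℕ) (hn : 1 ≤ n)
    (σ : Type*) [Fintype σ] [DecidableEq σ] :
    ∑ v ∈ Finset.Nat.antidiagonalTuple 3 n,
        F2val ((v 0 : ℚ) + (v 1) + (v 2)) ((v 0 : ℚ) ^ 2 + (v 1) ^ 2 + (v 2) ^ 2) •
          (esymm σ ℚ (v 0) * esymm σ ℚ (v 1) * esymm σ ℚ (v 2)) =
    ∑ μ : n.Partition,
      ((-1 : ℚ) ^ (n - μ.parts.card) *
        f2val (μ.parts.sum : ℚ) (((μ.parts.map (· ^ 2)).sum : ℕ) : ℚ) *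
        (((μ.parts.card + 2).factorial : ℚ) /
          ∏ i ∈ μ.parts.toFinset, ((μ.parts.count i).factorial : ℚ))) •
        hsymmPart σ ℚ μ :=
  F2_esymm_eq_f2_hsymm_general (hsymm_zero σ ℚ)
    (KerovExpansion.mk_esymm_mul_rescale_mk_hsymm σ ℚ) n
end

section
/- Let R be a commutative ℚ-algebra, let r ≥ 3 be an integer, and set a(r) = −(1/2880)(r−1)(r−3)(r²−4r−6) and b(r) = (1/480)(2r²−3). Let y_1, y_2, y_3, … be any sequence of elements of R, define C_0 = 1 and C_m = Σ_{μ ⊢ m} (ℓ(μ)!/Π_i m_i(μ)!) Π_j y_{μ_j} for m ≥ 1, and define f_2(μ) = (1/5760)(2·p_2(μ)·p_1(μ)² + p_1(μ)⁴ + 12·p_2(μ)·p_1(μ) + 8·p_1(μ)³ + 15·p_2(μ) + 20·p_1(μ)² + 18·p_1(μ)). Then Σ_{(i,j,k)∈ℕ³, i+j+k=r−3} (a(r) + b(r)·i²) · C_i·C_j·C_k = Σ_{μ ⊢ r−3} ((ℓ(μ)+2)!/Π_i m_i(μ)!) · f_2(μ) · Π_j y_{μ_j}. -/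
/-!
Put `Y = ∑ yᵢ Xⁱ` (over `i ≥ 1`) and `G = 1 / (1 - Y)`. Expanding `G ^ (d + 1)` as a binomial
series in `Y` and each `Yᵏ` by the multinomial theorem, the `n`-th coefficient of `G ^ (d + 1)` is a
sum over partitions `μ` of `n` in which `y_μ` has coefficient `(ℓ(μ) + d)! / (d! ∏ mᵢ(μ)!)`. So
`d = 0` identifies `C m` as a coefficient of `G`, and `d = 2` evaluates `∑ Cᵢ Cⱼ C_k`.

The power sum `p₂` comes from a first-order deformation. The expansion holds over every commutative
ring, in particular over the dual numbers with weights `(1 + i² ε) yᵢ`: then `y_μ` becomes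
`(1 + p₂(μ) ε) y_μ`, while `Y` becomes `Y + ε D² Y` and `G` becomes `G + ε G² D² Y`, where
`D = X d/dX`. Comparing `ε`-parts in `G³` shows that `3 G⁴ D² Y` has the coefficients of `G³`
weighted by `p₂(μ)`.

Differentiating `G (1 - Y) = 1` twice gives `6 G² D² G = D² (G³) + 3 G⁴ D² Y`, whose `n`-th
coefficient evaluates `∑ i² Cᵢ Cⱼ C_k` as the partition sum with weight `(n² + p₂(μ)) / 12`. It
remains to note that `f₂ = a(r) / 2 + b(r) (n² + p₂) / 12` for `r = n + 3`.
-/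

open Finset

/-- The Goulden–Rattan coefficient `a(r) = −(1/2880)(r−1)(r−3)(r²−4r−6)`. -/
def aGR (r : ℕ) : ℚ :=
  -(1 / 2880) * ((r : ℚ) - 1) * ((r : ℚ) - 3) * ((r : ℚ) ^ 2 - 4 * (r : ℚ) - 6)

/-- The Goulden–Rattan coefficient `b(r) = (1/480)(2r²−3)`. -/
def bGR (r : ℕ) : ℚ := (1 / 480) * (2 * (r : ℚ) ^ 2 - 3)

namespace GouldenRattan

open PowerSeries DualNumber

section Derivation

variable {S A : Type*} [CommRing S] [CommRing A] [Algebra S A]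

theorem derivation_eq_sq_mul_of_mul_one_sub_eq_one (D : Derivation S A A) {u y : A}
    (h : u * (1 - y) = 1) : D u = u ^ 2 * D y := by
  have hD := congrArg D h
  simp only [Derivation.leibniz, map_sub, Derivation.map_one_eq_zero, smul_eq_mul] at hD
  linear_combination u * hD - D u * h

theorem six_nsmul_sq_mul_derivation_derivation (D : Derivation S A A) {u y : A}
    (h : u * (1 - y) = 1) :
    6 • (u ^ 2 * D (D u)) = D (D (u ^ 3)) + 3 • (u ^ 4 * D (D y)) := by
  have hu : D u = u ^ 2 * D y := derivation_eq_sq_mul_of_mul_one_sub_eq_one D h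
  have huu : D (D u) = u ^ 2 * D (D y) + 2 * u ^ 3 * D y ^ 2 := by
    simp only [hu, Derivation.leibniz, Derivation.leibniz_pow, smul_eq_mul, nsmul_eq_mul]
    push_cast
    ring
  have hcube : D (D (u ^ 3)) = 3 * u ^ 2 * D (D u) + 6 * u * D u ^ 2 := by
    simp only [Derivation.leibniz, Derivation.leibniz_pow, smul_eq_mul, nsmul_eq_mul,
      Derivation.map_natCast]
    push_cast
    ring
  rw [hcube, huu, hu, nsmul_eq_mul, nsmul_eq_mul]
  push_cast
  ring

end Derivation

section Multiset

theorem choose_mul_countPerms {α : Type*} [DecidableEq α] (s : Multiset α) (d : ℕ) :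
    ((s.card + d).choose d * s.countPerms : ℚ) =
      (s.card + d).factorial / (∏ i ∈ s.toFinset, ((s.count i).factorial : ℚ)) /
        d.factorial := by
  have hcount : (∏ i ∈ s.toFinset, (s.count i).factorial) * s.countPerms = s.card.factorial := by
    rw [Multiset.countPerms, Finsupp.multinomial_eq, Multiset.toFinsupp_support,
      ← s.toFinset_sum_count_eq]
    exact Nat.multinomial_spec _ _
  have hchoose : (s.card + d).choose d * s.card.factorial * d.factorial =
      (s.card + d).factorial := Nat.add_choose_mul_factorial_mul_factorial _ _
  have hprod : ∏ i ∈ s.toFinset, ((s.count i).factorial : ℚ) ≠ 0 :=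
    prod_ne_zero_iff.mpr fun i _ => by positivity
  rw [eq_div_iff (by positivity), eq_div_iff hprod, ← hchoose, ← hcount]
  push_cast
  ring

theorem sum_sym_filter_eq_sum_partition {M : Type*} [AddCommMonoid M] (n k : ℕ)
    (g : Multiset ℕ → M) :
    ∑ s ∈ (Icc 1 n).sym k with s.val.sum = n, g s.val =
      ∑ μ : n.Partition with μ.parts.card = k, g μ.parts := by
  refine sum_bij'
    (fun s hs => ⟨s.val, fun {i} hi => ?_, (mem_filter.mp hs).2⟩)
    (fun μ hμ => ⟨μ.parts, (mem_filter.mp hμ).2⟩)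
    (fun s _ => mem_filter.mpr ⟨mem_univ _, s.2⟩)
    (fun μ _ => mem_filter.mpr ⟨mem_sym_iff.mpr fun i hi => mem_Icc.mpr ⟨μ.parts_pos hi, ?_⟩,
      μ.parts_sum⟩)
    (fun _ _ => rfl) (fun _ _ => rfl) (fun _ _ => rfl)
  · exact (mem_Icc.mp (mem_sym_iff.mp (mem_filter.mp hs).1 i hi)).1
  · exact (Multiset.le_sum_of_mem hi).trans_eq μ.parts_sum

end Multiset

section CommSemiring

variable {R : Type*} [CommSemiring R]

theorem add_mul_pow_of_mul_self_eq_zero {e : R} (he : e * e = 0) (a b : R) (d : ℕ) :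
    (a + e * b) ^ (d + 1) = a ^ (d + 1) + e * ((d + 1) • (a ^ d * b)) := by
  induction d with
  | zero => simp
  | succ d ih =>
    calc (a + e * b) ^ (d + 1 + 1)
        = a ^ (d + 2) + e * ((d + 2) * (a ^ (d + 1) * b)) +
            e * e * ((d + 1) * (a ^ d * b ^ 2)) := by
          rw [pow_succ, ih, nsmul_eq_mul]
          push_cast
          ring
      _ = a ^ (d + 1 + 1) + e * ((d + 1 + 1) • (a ^ (d + 1) * b)) := by
          rw [he, zero_mul, add_zero, nsmul_eq_mul]
          push_cast
          ring

theorem coeff_prod_fin {k : ℕ} (f : Fin k → R⟦X⟧) (n : ℕ) :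
    coeff n (∏ j, f j) = ∑ v ∈ Nat.antidiagonalTuple k n, ∏ j, coeff (v j) (f j) := by
  rw [coeff_prod]
  refine sum_equiv Finsupp.equivFunOnFinite (fun l => ?_) fun l _ => rfl
  simp [Nat.mem_antidiagonalTuple]

theorem coeff_mul_mul (f g h : R⟦X⟧) (n : ℕ) :
    coeff n (f * g * h) = ∑ v ∈ Nat.antidiagonalTuple 3 n,
      coeff (v 0) f * coeff (v 1) g * coeff (v 2) h := by
  simpa [Fin.prod_univ_three] using coeff_prod_fin ![f, g, h] n

/-- The derivation `X d/dX` of `R⟦X⟧`, which multiplies the coefficient of `X ^ n` by `n`. -/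
noncomputable def eulerDerivation : Derivation R R⟦X⟧ R⟦X⟧ :=
  (X : R⟦X⟧) • PowerSeries.derivative R

theorem coeff_eulerDerivation (f : R⟦X⟧) (n : ℕ) :
    coeff n (eulerDerivation f) = n * coeff n f := by
  cases n with
  | zero => simp [eulerDerivation]
  | succ n =>
    rw [eulerDerivation, Derivation.smul_apply, smul_eq_mul, coeff_succ_X_mul, coeff_derivative,
      mul_comm, Nat.cast_succ]

theorem coeff_sq_mul_eulerDerivation_eulerDerivation (f : R⟦X⟧) (n : ℕ) :
    coeff n (f ^ 2 * eulerDerivation (eulerDerivation f)) =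
      ∑ v ∈ Nat.antidiagonalTuple 3 n,
        v 0 ^ 2 • (coeff (v 0) f * coeff (v 1) f * coeff (v 2) f) := by
  rw [mul_comm, sq f, ← mul_assoc, coeff_mul_mul]
  refine sum_congr rfl fun v _ => ?_
  rw [coeff_eulerDerivation, coeff_eulerDerivation, nsmul_eq_mul]
  push_cast
  ring

/-- The generating function `Y = ∑ yᵢ Xⁱ` over the possible parts `i ≥ 1` of a partition; the value
`y 0` is discarded. -/
noncomputable def partSeries (y : ℕ → R) : R⟦X⟧ := mk fun i => if i = 0 then 0 else y i

theorem eulerDerivation_partSeries (y : ℕ → R) :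
    eulerDerivation (partSeries y) = partSeries fun i => i * y i := by
  ext n
  simp [coeff_eulerDerivation, partSeries]

theorem trunc_partSeries (y : ℕ → R) (n : ℕ) :
    (trunc (n + 1) (partSeries y) : R⟦X⟧) = ∑ i ∈ Icc 1 n, monomial i (y i) := by
  ext m
  simp only [Polynomial.coeff_coe, coeff_trunc, partSeries, coeff_mk, map_sum, coeff_monomial,
    sum_ite_eq, mem_Icc]
  split_ifs <;> first | rfl | omega

theorem prod_map_monomial (y : ℕ → R) (s : Multiset ℕ) :
    (s.map fun i => monomial i (y i)).prod = monomial s.sum (s.map y).prod := by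
  induction s using Multiset.induction_on with
  | empty => simp
  | cons i s ih => simp [ih, monomial_mul_monomial]

theorem coeff_partSeries_pow (y : ℕ → R) (n k : ℕ) :
    coeff n (partSeries y ^ k) =
      ∑ μ : n.Partition with μ.parts.card = k, μ.parts.countPerms • (μ.parts.map y).prod := by
  have htrunc : coeff n (partSeries y ^ k) = coeff n ((∑ i ∈ Icc 1 n, monomial i (y i)) ^ k) := by
    rw [← trunc_partSeries, ← coeff_coe_trunc_of_lt n.lt_succ_self,
      ← coeff_coe_trunc_of_lt (f := _ ^ k) n.lt_succ_self, trunc_trunc_pow]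
  rw [htrunc, sum_pow, map_sum,
    ← sum_sym_filter_eq_sum_partition n k fun s => s.countPerms • (s.map y).prod, sum_filter]
  refine sum_congr rfl fun s _ => ?_
  rw [prod_map_monomial, ← nsmul_eq_mul, map_nsmul, coeff_monomial]
  simp only [eq_comm (a := n), smul_ite, smul_zero]

/-- The first-order deformation `(1 + g i ε) yᵢ` of the weights `yᵢ`. Its `ε`-part turns partition
sums of `y_μ` into partition sums weighted by `∑ g` over the parts of `μ`. -/
def deform (y g : ℕ → R) (i : ℕ) : R[ε] := TrivSqZeroExt.inl (y i) + TrivSqZeroExt.inr (g i * y i)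

theorem prod_map_deform (y g : ℕ → R) (s : Multiset ℕ) :
    (s.map (deform y g)).prod =
      TrivSqZeroExt.inl (s.map y).prod + TrivSqZeroExt.inr ((s.map g).sum * (s.map y).prod) := by
  induction s using Multiset.induction_on with
  | empty => simp
  | cons i s ih =>
    ext
    · simp [ih, deform]
    · simp only [Multiset.map_cons, Multiset.prod_cons, Multiset.sum_cons, ih, deform, snd_mul,
        TrivSqZeroExt.fst_add, TrivSqZeroExt.snd_add, TrivSqZeroExt.fst_inl,
        TrivSqZeroExt.fst_inr, TrivSqZeroExt.snd_inl, TrivSqZeroExt.snd_inr]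
      ring

/-- The coefficientwise inclusion of `R⟦X⟧` in `R[ε]⟦X⟧`. -/
noncomputable abbrev toDual : R⟦X⟧ →+* R[ε]⟦X⟧ := PowerSeries.map (TrivSqZeroExt.inlHom R R)

theorem C_eps_mul_C_eps : (C ε : R[ε]⟦X⟧) * C ε = 0 := by
  rw [← map_mul, eps_mul_eps, map_zero]

theorem snd_coeff_toDual_add (f h : R⟦X⟧) (n : ℕ) :
    TrivSqZeroExt.snd (coeff n (toDual f + C ε * toDual h)) = coeff n h := by
  simp [-coeff_zero_eq_constantCoeff]

theorem partSeries_deform (y g : ℕ → R) :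
    partSeries (deform y g) =
      toDual (partSeries y) + C ε * toDual (partSeries fun i => g i * y i) := by
  ext n <;> by_cases hn : n = 0 <;> simp [partSeries, deform, hn, -coeff_zero_eq_constantCoeff]

end CommSemiring

section CommRing

variable {R : Type*} [CommRing R]

theorem hasSubst_partSeries (y : ℕ → R) : HasSubst (partSeries y) :=
  .of_constantCoeff_zero' <| by simp [partSeries, ← coeff_zero_eq_constantCoeff_apply]

theorem coeff_subst_partSeries {S : Type*} [CommRing S] [Algebra S R] (f : S⟦X⟧) (y : ℕ → R)
    (n : ℕ) :
    coeff n (f.subst (partSeries y)) =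
      ∑ μ : n.Partition, coeff μ.parts.card f • μ.parts.countPerms • (μ.parts.map y).prod := by
  simp only [coeff_subst' (hasSubst_partSeries y), coeff_partSeries_pow, smul_sum, sum_filter,
    smul_ite, smul_zero]
  rw [finsum_sum_comm]
  · refine sum_congr rfl fun μ _ => ?_
    rw [finsum_eq_single _ μ.parts.card fun k hk => if_neg hk.symm, if_pos rfl]
  · refine fun μ _ => (Set.finite_singleton μ.parts.card).subset fun k hk => ?_
    by_contra hne
    exact hk (if_neg (Ne.symm hne))

/-- The series `G = 1 / (1 - Y)` for `Y = partSeries y`, whose coefficients are the `C_m`. -/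
noncomputable def geomSeries (y : ℕ → R) : R⟦X⟧ := (mk 1 : R⟦X⟧).subst (partSeries y)

theorem geomSeries_mul_one_sub (y : ℕ → R) : geomSeries y * (1 - partSeries y) = 1 := by
  have h := congrArg (substAlgHom (hasSubst_partSeries y)) (mk_one_mul_one_sub_eq_one R)
  simp only [map_mul, map_sub, map_one, substAlgHom_X, coe_substAlgHom] at h
  exact h

theorem coeff_geomSeries_pow (y : ℕ → R) (n d : ℕ) :
    coeff n (geomSeries y ^ (d + 1)) = ∑ μ : n.Partition,
      ((μ.parts.card + d).choose d * μ.parts.countPerms) • (μ.parts.map y).prod := by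
  rw [geomSeries, ← subst_pow (hasSubst_partSeries y), mk_one_pow_eq_mk_choose_add,
    coeff_subst_partSeries]
  simp only [coeff_mk, Nat.cast_smul_eq_nsmul, mul_smul, add_comm d]

theorem geomSeries_deform (y g : ℕ → R) :
    geomSeries (deform y g) = toDual (geomSeries y) +
      C ε * toDual (geomSeries y ^ 2 * partSeries fun i => g i * y i) := by
  have hinv := congrArg toDual (geomSeries_mul_one_sub y)
  refine left_inv_eq_right_inv (geomSeries_mul_one_sub (deform y g)) ?_
  simp only [partSeries_deform, map_mul, map_sub, map_one, map_pow] at hinv ⊢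
  set G := toDual (geomSeries y)
  set Z := toDual (partSeries fun i => g i * y i)
  linear_combination (1 + C ε * (G * Z)) * hinv - G ^ 2 * Z ^ 2 * C_eps_mul_C_eps (R := R)

theorem geomSeries_deform_pow (y g : ℕ → R) (d : ℕ) :
    geomSeries (deform y g) ^ (d + 1) = toDual (geomSeries y ^ (d + 1)) +
      C ε * toDual ((d + 1) • (geomSeries y ^ (d + 2) * partSeries fun i => g i * y i)) := by
  rw [geomSeries_deform, add_mul_pow_of_mul_self_eq_zero C_eps_mul_C_eps]
  simp only [map_mul, map_pow, map_nsmul, pow_add, mul_assoc]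

theorem coeff_geomSeries_pow_mul_partSeries (y g : ℕ → R) (n d : ℕ) :
    coeff n ((d + 1) • (geomSeries y ^ (d + 2) * partSeries fun i => g i * y i)) =
      ∑ μ : n.Partition, ((μ.parts.card + d).choose d * μ.parts.countPerms) •
        ((μ.parts.map g).sum * (μ.parts.map y).prod) := by
  rw [← snd_coeff_toDual_add (geomSeries y ^ (d + 1)), ← geomSeries_deform_pow,
    coeff_geomSeries_pow, TrivSqZeroExt.snd_sum]
  simp only [prod_map_deform, TrivSqZeroExt.snd_smul, TrivSqZeroExt.snd_add,
    TrivSqZeroExt.snd_inl, TrivSqZeroExt.snd_inr, zero_add]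

theorem sum_antidiagonalTuple_coeff_geomSeries (y : ℕ → R) (n : ℕ) :
    ∑ v ∈ Nat.antidiagonalTuple 3 n, coeff (v 0) (geomSeries y) * coeff (v 1) (geomSeries y) *
        coeff (v 2) (geomSeries y) =
      ∑ μ : n.Partition,
        ((μ.parts.card + 2).choose 2 * μ.parts.countPerms) • (μ.parts.map y).prod := by
  rw [← coeff_mul_mul, ← pow_three', coeff_geomSeries_pow]

theorem six_nsmul_sum_antidiagonalTuple_sq_nsmul_coeff_geomSeries (y : ℕ → R) (n : ℕ) :
    6 • ∑ v ∈ Nat.antidiagonalTuple 3 n, v 0 ^ 2 • (coeff (v 0) (geomSeries y) *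
        coeff (v 1) (geomSeries y) * coeff (v 2) (geomSeries y)) =
      ∑ μ : n.Partition, ((μ.parts.card + 2).choose 2 * μ.parts.countPerms *
        (n ^ 2 + (μ.parts.map (· ^ 2)).sum)) • (μ.parts.map y).prod := by
  have hY : eulerDerivation (eulerDerivation (partSeries y)) =
      partSeries fun i => (i ^ 2 : R) * y i := by
    simp only [eulerDerivation_partSeries, ← mul_assoc, ← sq]
  rw [← coeff_sq_mul_eulerDerivation_eulerDerivation, ← map_nsmul,
    six_nsmul_sq_mul_derivation_derivation _ (geomSeries_mul_one_sub y), map_add,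
    coeff_eulerDerivation, coeff_eulerDerivation, hY, coeff_geomSeries_pow y n 2,
    coeff_geomSeries_pow_mul_partSeries y (fun i => (i ^ 2 : R)) n 2, mul_sum, mul_sum,
    ← sum_add_distrib]
  refine sum_congr rfl fun μ _ => ?_
  have hcast : (μ.parts.map fun i : ℕ => (i ^ 2 : R)).sum = ((μ.parts.map (· ^ 2)).sum : ℕ) := by
    simp only [Nat.cast_multiset_sum, Multiset.map_map, Function.comp_def, Nat.cast_pow]
  rw [hcast]
  simp only [nsmul_eq_mul]
  push_cast
  ring

end CommRing

section Algebra

variable {R : Type*} [CommRing R] [Algebra ℚ R]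

theorem coeff_geomSeries (y : ℕ → R) (n : ℕ) :
    coeff n (geomSeries y) = ∑ μ : n.Partition,
      ((μ.parts.card.factorial : ℚ) / ∏ i ∈ μ.parts.toFinset, ((μ.parts.count i).factorial : ℚ)) •
        (μ.parts.map y).prod := by
  rw [← pow_one (geomSeries y), coeff_geomSeries_pow y n 0]
  refine sum_congr rfl fun μ _ => ?_
  rw [← Nat.cast_smul_eq_nsmul ℚ, Nat.cast_mul, choose_mul_countPerms, add_zero,
    Nat.factorial_zero, Nat.cast_one, div_one]

theorem sum_antidiagonalTuple_quadratic_smul_coeff_geomSeries (y : ℕ → R) (n : ℕ) (a b : ℚ) :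
    ∑ v ∈ Nat.antidiagonalTuple 3 n, (a + b * (v 0 : ℚ) ^ 2) • (coeff (v 0) (geomSeries y) *
        coeff (v 1) (geomSeries y) * coeff (v 2) (geomSeries y)) =
      ∑ μ : n.Partition,
        ((((μ.parts.card + 2).factorial : ℚ) /
            ∏ i ∈ μ.parts.toFinset, ((μ.parts.count i).factorial : ℚ)) *
          (a / 2 + b * (n ^ 2 + ((μ.parts.map (· ^ 2)).sum : ℕ)) / 12)) •
          (μ.parts.map y).prod := by
  set c : (Fin 3 → ℕ) → R := fun v => coeff (v 0) (geomSeries y) * coeff (v 1) (geomSeries y) *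
    coeff (v 2) (geomSeries y)
  have hsplit : ∑ v ∈ Nat.antidiagonalTuple 3 n, (a + b * (v 0 : ℚ) ^ 2) • c v =
      a • ∑ v ∈ Nat.antidiagonalTuple 3 n, c v +
        (b / 6) • 6 • ∑ v ∈ Nat.antidiagonalTuple 3 n, v 0 ^ 2 • c v := by
    simp only [smul_sum, ← sum_add_distrib, ← Nat.cast_smul_eq_nsmul ℚ, smul_smul, ← add_smul]
    refine sum_congr rfl fun v _ => congrArg (· • c v) ?_
    push_cast
    ring
  rw [hsplit, sum_antidiagonalTuple_coeff_geomSeries,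
    six_nsmul_sum_antidiagonalTuple_sq_nsmul_coeff_geomSeries]
  simp only [smul_sum, ← sum_add_distrib, ← Nat.cast_smul_eq_nsmul ℚ, smul_smul, ← add_smul]
  refine sum_congr rfl fun μ _ => congrArg (· • (μ.parts.map y).prod) ?_
  push_cast
  rw [choose_mul_countPerms, Nat.factorial_two]
  push_cast
  ring

end Algebra

theorem f2val_eq_aGR_add_bGR (n : ℕ) (p : ℚ) :
    f2val n p = aGR (n + 3) / 2 + bGR (n + 3) * (n ^ 2 + p) / 12 := by
  simp only [aGR, bGR, f2val]
  push_cast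
  ring

end GouldenRattan

open GouldenRattan

/-- **Theorem 1 (abstract form).** With `C₀ = 1` and
`C_m = ∑_{μ ⊢ m} (ℓ(μ)!/∏ᵢ mᵢ(μ)!) ∏ⱼ y_{μⱼ}` for `m ≥ 1`, for any integer `r ≥ 3`:
`∑_{i+j+k=r−3} (a(r) + b(r) i²) Cᵢ Cⱼ C_k
  = ∑_{μ ⊢ r−3} ((ℓ(μ)+2)!/∏ᵢ mᵢ(μ)!) f₂(μ) ∏ⱼ y_{μⱼ}`. -/
theorem goulden_rattan_f2_expansion (R : Type*) [CommRing R] [Algebra ℚ R]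
    (r : ℕ) (hr : 3 ≤ r) (y : ℕ → R) (C : ℕ → R) (hC0 : C 0 = 1)
    (hC : ∀ m : ℕ, 1 ≤ m → C m = ∑ μ : m.Partition,
      ((μ.parts.card.factorial : ℚ) /
          ∏ i ∈ μ.parts.toFinset, ((μ.parts.count i).factorial : ℚ)) •
        (μ.parts.map y).prod) :
    ∑ v ∈ Finset.Nat.antidiagonalTuple 3 (r - 3),
        (aGR r + bGR r * (v 0 : ℚ) ^ 2) • (C (v 0) * C (v 1) * C (v 2)) =
    ∑ μ : (r - 3).Partition,
      ((((μ.parts.card + 2).factorial : ℚ) /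
          ∏ i ∈ μ.parts.toFinset, ((μ.parts.count i).factorial : ℚ)) *
        f2val (μ.parts.sum : ℚ) (((μ.parts.map (· ^ 2)).sum : ℕ) : ℚ)) •
        (μ.parts.map y).prod := by
  obtain ⟨n, rfl⟩ := Nat.exists_eq_add_of_le' hr
  obtain rfl : C = fun m => PowerSeries.coeff m (geomSeries y) := by
    ext m
    rcases m.eq_zero_or_pos with rfl | hm
    · rw [hC0, coeff_geomSeries]
      simp
    · rw [hC m hm, coeff_geomSeries]
  rw [Nat.add_sub_cancel, sum_antidiagonalTuple_quadratic_smul_coeff_geomSeries]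
  simp only [Nat.Partition.parts_sum, f2val_eq_aGR_add_bGR]
end
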